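/- arXiv:1409.8535 — 3 statements merged into one kernel-verified Lean document; each statement's English description precedes it below -/
import Mathlib

section
/- For every real K > 0 there exist constants c₁ > 0 and c₂ > 0, depending only on K, such that the following holds. If A ⊆ ℤ is a finite nonempty set with |A+A| ≤ K·|A|, then there exist a subset A' ⊆ A with |A'| ≥ c₁·|A| and an order-preserving Freiman 2-isomorphism φ : A' → [-c₂·|A'|, c₂·|A'|] ∩ ℤ. -/
open Pointwise

/-- `φ` is an order-preserving Freiman 2-isomorphism on the finite set `A ⊆ ℤ`:
it preserves order, and additive quadruples, in both directions. -/
def IsOrderPresFreiman2Iso (A : Finset ℤ) (φ : ℤ → ℤ) : Prop :=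
  (∀ a ∈ A, ∀ b ∈ A, (a < b ↔ φ a < φ b)) ∧
  (∀ a ∈ A, ∀ b ∈ A, ∀ c ∈ A, ∀ d ∈ A, (a + b = c + d ↔ φ a + φ b = φ c + φ d))


theorem cl_bogolyubov (N : ℕ) [NeZero N] (S : Finset (ZMod N)) (hS : S.Nonempty) :
    ∃ Γ : Finset (ZMod N), (Γ.card : ℝ) * (S.card : ℝ) ^ 2 ≤ (N : ℝ) ^ 2 ∧
      ∀ x : ZMod N, (∀ r ∈ Γ, 0 ≤ (ZMod.stdAddChar (r * x) : ℂ).re) →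
        ∃ a ∈ S, ∃ b ∈ S, ∃ c ∈ S, ∃ d ∈ S, x = a + b - c - d := by
  classical
  set ψ : AddChar (ZMod N) ℂ := ZMod.stdAddChar with hψ
  have hprim : ψ.IsPrimitive := ZMod.isPrimitive_stdAddChar N
  have horth : ∀ b : ZMod N, ∑ r, ψ (r * b) = if b = 0 then (N : ℂ) else 0 := by
    intro b
    have := AddChar.sum_mulShift b hprim
    rw [this]; simp [ZMod.card]
  set F : ZMod N → ℂ := fun r => ∑ a ∈ S, ψ (r * a) with hF
  have hconj : ∀ r, (starRingEnd ℂ) (F r) = ∑ a ∈ S, ψ (-(r * a)) := by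
    intro r
    simp only [hF, map_sum, AddChar.map_neg_eq_conj]
  have hN : (0 : ℝ) < N := by exact_mod_cast Nat.pos_of_ne_zero (NeZero.ne N)
  have hSc : (0 : ℝ) < S.card := by exact_mod_cast hS.card_pos
  have hns : ∀ r, ((Complex.normSq (F r) : ℝ) : ℂ) = ∑ a ∈ S, ∑ b ∈ S, ψ (r * (a - b)) := by
    intro r
    rw [← Complex.mul_conj, hconj]
    simp only [hF]
    rw [Finset.sum_mul_sum]
    refine Finset.sum_congr rfl fun a _ => Finset.sum_congr rfl fun b _ => ?_
    rw [← AddChar.map_add_eq_mul]; congr 1; ring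
  have hpars : ∑ r, Complex.normSq (F r) = N * S.card := by
    have : ((∑ r, Complex.normSq (F r) : ℝ) : ℂ) = ((N * S.card : ℝ) : ℂ) := by
      push_cast
      simp_rw [hns]
      rw [Finset.sum_comm]
      have : ∀ a ∈ S, ∑ r, ∑ b ∈ S, ψ (r * (a - b)) = (N : ℂ) := by
        intro a ha
        rw [Finset.sum_comm]
        simp_rw [horth, sub_eq_zero]
        simp [ha]
      rw [Finset.sum_congr rfl this]
      simp [mul_comm]
    exact_mod_cast this
  set Γ : Finset (ZMod N) := Finset.univ.filter
    (fun r => (S.card : ℝ) ^ 3 / N ≤ Complex.normSq (F r)) with hΓ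
  refine ⟨Γ, ?_, ?_⟩
  · have h1 : (Γ.card : ℝ) * ((S.card : ℝ) ^ 3 / N) ≤ N * S.card := by
      rw [← hpars, ← nsmul_eq_mul]
      refine le_trans (Finset.card_nsmul_le_sum Γ (fun r => Complex.normSq (F r)) _ ?_) ?_
      · intro r hr; exact (Finset.mem_filter.mp hr).2
      · exact Finset.sum_le_sum_of_subset_of_nonneg (Finset.subset_univ _)
          (fun _ _ _ => Complex.normSq_nonneg _)
    rw [← mul_div_assoc, div_le_iff₀ hN] at h1
    have : (Γ.card : ℝ) * (S.card : ℝ) ^ 2 * S.card ≤ (N : ℝ) ^ 2 * S.card := by nlinarith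
    exact le_of_mul_le_mul_right this hSc
  · intro x hx
    by_contra hno
    have hF0 : F 0 = S.card := by simp [hF]
    have hn0 : Complex.normSq (F 0) = (S.card : ℝ) ^ 2 := by
      rw [hF0]; simp [Complex.normSq_apply, sq]
    have hzero : ∑ r, ((Complex.normSq (F r) : ℝ) : ℂ) ^ 2 * ψ (r * x) = 0 := by
      have : ∀ r, ((Complex.normSq (F r) : ℝ) : ℂ) ^ 2 * ψ (r * x)
          = ∑ a ∈ S, ∑ c ∈ S, ∑ b ∈ S, ∑ d ∈ S, ψ (r * (x + (a - c) + (b - d))) := by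
        intro r
        rw [sq, hns, Finset.sum_mul_sum, Finset.sum_mul]
        simp only [Finset.sum_mul, Finset.sum_mul_sum, Finset.mul_sum]
        refine Finset.sum_congr rfl fun a _ => ?_
        rw [Finset.sum_comm]
        refine Finset.sum_congr rfl fun c _ => Finset.sum_congr rfl fun b _ =>
          Finset.sum_congr rfl fun d _ => ?_
        rw [← AddChar.map_add_eq_mul, ← AddChar.map_add_eq_mul]; congr 1; ring
      simp_rw [this]
      rw [Finset.sum_comm]; refine Finset.sum_eq_zero fun a ha => ?_
      rw [Finset.sum_comm]; refine Finset.sum_eq_zero fun c hc => ?_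
      rw [Finset.sum_comm]; refine Finset.sum_eq_zero fun b hb => ?_
      rw [Finset.sum_comm]; refine Finset.sum_eq_zero fun d hd => ?_
      rw [horth, if_neg]
      intro h0
      exact hno ⟨c, hc, d, hd, a, ha, b, hb, by linear_combination h0⟩
    have hre : ∑ r, (Complex.normSq (F r)) ^ 2 * (ψ (r * x)).re = 0 := by
      have := congrArg Complex.re hzero
      rw [Complex.re_sum] at this
      simpa [← Complex.ofReal_pow] using this
    have habs : ∀ r, -1 ≤ (ψ (r * x)).re := by
      intro r
      have h1 := Complex.abs_re_le_norm (ψ (r * x))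
      rw [AddChar.norm_apply] at h1
      exact (abs_le.mp h1).1
    have h0Γ : (0 : ZMod N) ∈ Γ := by
      simp only [hΓ, Finset.mem_filter, Finset.mem_univ, true_and, hn0]
      rw [div_le_iff₀ hN]
      have : (S.card : ℝ) ≤ N := by
        have := Finset.card_le_univ S
        rw [ZMod.card] at this; exact_mod_cast this
      nlinarith [sq_nonneg (S.card : ℝ)]
    have hlow : ∀ r, (if r = 0 then (S.card : ℝ) ^ 4 + (S.card : ℝ) ^ 3 / N * (S.card : ℝ) ^ 2 else 0)
        - (S.card : ℝ) ^ 3 / N * Complex.normSq (F r) ≤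
        (Complex.normSq (F r)) ^ 2 * (ψ (r * x)).re := by
      intro r
      have hnn := Complex.normSq_nonneg (F r)
      have hp : 0 ≤ (S.card : ℝ) ^ 3 / N := by positivity
      split_ifs with h
      · subst h; rw [hn0]; simp; nlinarith
      · by_cases hr : r ∈ Γ
        · have := hx r hr
          have : 0 ≤ (Complex.normSq (F r)) ^ 2 * (ψ (r * x)).re := by positivity
          nlinarith [mul_nonneg hp hnn]
        · have h2 : Complex.normSq (F r) < (S.card : ℝ) ^ 3 / N := by
            simpa [hΓ] using hr
          have h3 := habs r
          nlinarith [mul_le_mul_of_nonneg_left h2.le hnn, mul_nonneg hnn hnn,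
            mul_le_mul_of_nonneg_left h3 (mul_nonneg hnn hnn)]
    have hs := Finset.sum_le_sum (fun r (_ : r ∈ Finset.univ) => hlow r)
    rw [hre, Finset.sum_sub_distrib, ← Finset.mul_sum, hpars] at hs
    simp only [Finset.sum_ite_eq', Finset.mem_univ, if_true] at hs
    have e1 : (S.card : ℝ) ^ 3 / N * (N * S.card) = (S.card : ℝ) ^ 4 := by field_simp
    rw [e1] at hs
    have : 0 < (S.card : ℝ) ^ 3 / N * (S.card : ℝ) ^ 2 := by positivity
    linarith


theorem cl_ruzsa_mult (D : Finset ℤ) (h0 : (0 : ℤ) ∈ D) :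
    ∃ p : ℕ, p.Prime ∧ ∃ l : ℤ, ∀ x ∈ D, x ≠ 0 → ¬ ((D.card : ℤ) ∣ (l * x) % p) := by
  classical
  obtain ⟨p, hpM, hp⟩ := Nat.exists_infinite_primes (D.sup Int.natAbs + 1)
  refine ⟨p, hp, ?_⟩
  set N := D.card with hN
  have hNpos : 0 < N := Finset.card_pos.mpr ⟨0, h0⟩
  have hp2 := hp.two_le
  have hpx : ∀ x ∈ D, x ≠ 0 → ¬ ((p : ℤ) ∣ x) := by
    intro x hx hx0 hd
    have h1 : x.natAbs ≤ D.sup Int.natAbs := Finset.le_sup hx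
    have h2 := Int.natAbs_dvd_natAbs.mpr hd
    have h3 := Nat.le_of_dvd (Int.natAbs_pos.mpr hx0) h2
    simp at h3
    omega
  have hpp : Prime (p : ℤ) := Nat.prime_iff_prime_int.mp hp
  set bad : ℤ → Finset ℕ := fun x => (Finset.Ioc 0 (p - 1)).filter
    (fun l => (N : ℤ) ∣ ((l : ℤ) * x) % p) with hbad
  have hcard : ∀ x ∈ D.erase 0, (bad x).card ≤ (p - 1) / N := by
    intro x hx
    rw [Finset.mem_erase] at hx
    rw [← Nat.Ioc_filter_dvd_card_eq_div]
    refine Finset.card_le_card_of_injOn (fun l => (((l : ℤ) * x) % p).toNat) ?_ ?_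
    · intro l hl
      simp only [hbad, Finset.coe_filter, Finset.mem_Ioc, Set.mem_ofPred_eq] at hl ⊢
      have hpos : (0 : ℤ) < p := by exact_mod_cast hp.pos
      have h1 := Int.emod_nonneg ((l : ℤ) * x) hpos.ne'
      have h2 := Int.emod_lt_of_pos ((l : ℤ) * x) hpos
      have h3 : ((l : ℤ) * x) % p ≠ 0 := by
        intro h
        rcases hpp.dvd_or_dvd (Int.dvd_of_emod_eq_zero h) with h | h
        · have := Nat.le_of_dvd hl.1.1 (Int.natCast_dvd_natCast.mp h)
          omega
        · exact hpx x hx.2 hx.1 h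
      refine ⟨⟨by omega, by omega⟩, ?_⟩
      rw [← Int.natCast_dvd_natCast, Int.toNat_of_nonneg h1]
      exact hl.2
    · intro l hl l' hl' h
      simp only [hbad, Finset.coe_filter, Finset.mem_Ioc, Set.mem_ofPred_eq] at hl hl' h
      have hpos : (0 : ℤ) < p := by exact_mod_cast hp.pos
      have h1 := Int.emod_nonneg ((l : ℤ) * x) hpos.ne'
      have h2 := Int.emod_nonneg ((l' : ℤ) * x) hpos.ne'
      have h3 : ((l : ℤ) * x) % p = ((l' : ℤ) * x) % p := by omega
      have h4 := Int.emod_emod_of_dvd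
      have h5 : (p : ℤ) ∣ ((l : ℤ) - l') * x := by
        rw [sub_mul]; exact Int.dvd_of_emod_eq_zero (Int.emod_eq_emod_iff_emod_sub_eq_zero.mp h3)
      rcases hpp.dvd_or_dvd h5 with h | h
      · have := Int.eq_zero_of_abs_lt_dvd h (by rw [abs_lt]; constructor <;> omega)
        omega
      · exact absurd h (hpx x hx.2 hx.1)
  have hun : ((D.erase 0).biUnion bad).card < (Finset.Ioc 0 (p - 1)).card := by
    refine lt_of_le_of_lt Finset.card_biUnion_le ?_
    refine lt_of_le_of_lt (Finset.sum_le_card_nsmul _ _ _ hcard) ?_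
    rw [Finset.card_erase_of_mem h0, Nat.card_Ioc, smul_eq_mul, ← hN]
    have h1 : N * ((p - 1) / N) ≤ p - 1 := Nat.mul_div_le _ _
    rcases Nat.eq_zero_or_pos ((p - 1) / N) with h | h
    · rw [h]; omega
    · have : (N - 1) * ((p - 1) / N) < N * ((p - 1) / N) :=
        Nat.mul_lt_mul_of_pos_right (by omega) h
      omega
  obtain ⟨l, hl, hl'⟩ := Finset.exists_mem_notMem_of_card_lt_card hun
  refine ⟨l, fun x hx hx0 hd => hl' ?_⟩
  rw [Finset.mem_biUnion]
  exact ⟨x, Finset.mem_erase.mpr ⟨hx0, hx⟩, Finset.mem_filter.mpr ⟨hl, hd⟩⟩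

theorem cl_ruzsa (A : Finset ℤ) (hA : A.Nonempty) :
    ∃ A₁ ⊆ A, (A.card : ℝ) ≤ 6 * A₁.card ∧ ∃ ψ : ℤ → ℤ,
      ∀ x y : Fin 6 → ℤ, (∀ i, x i ∈ A₁) → (∀ i, y i ∈ A₁) →
        ((((6 • A - 6 • A).card : ℤ) ∣ ∑ i, ψ (x i) - ∑ i, ψ (y i)) ↔ ∑ i, x i = ∑ i, y i) := by
  classical
  have hmem : ∀ x y : Fin 6 → ℤ, (∀ i, x i ∈ A) → (∀ i, y i ∈ A) →
      ∑ i, x i - ∑ i, y i ∈ 6 • A - 6 • A := by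
    intro x y hx hy
    refine Finset.sub_mem_sub ?_ ?_
    · rw [Finset.mem_nsmul]; exact ⟨fun i => ⟨x i, hx i⟩, by rw [List.sum_ofFn]⟩
    · rw [Finset.mem_nsmul]; exact ⟨fun i => ⟨y i, hy i⟩, by rw [List.sum_ofFn]⟩
  obtain ⟨a₀, ha₀⟩ := hA
  have h0 : (0 : ℤ) ∈ 6 • A - 6 • A := by
    simpa using hmem (fun _ => a₀) (fun _ => a₀) (fun _ => ha₀) (fun _ => ha₀)
  obtain ⟨p, hp, l, hl⟩ := cl_ruzsa_mult _ h0
  have hpos : (0 : ℤ) < p := by exact_mod_cast hp.pos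
  set N := (6 • A - 6 • A).card
  set ψ : ℤ → ℤ := fun a => (l * a) % p with hψ
  have hψ0 : ∀ a, 0 ≤ ψ a := fun a => Int.emod_nonneg _ hpos.ne'
  have hψ1 : ∀ a, ψ a < p := fun a => Int.emod_lt_of_pos _ hpos
  have hmaps : ∀ a ∈ A, (6 * ψ a) / p ∈ Finset.Ico (0 : ℤ) 6 := by
    intro a _
    rw [Finset.mem_Ico]
    refine ⟨Int.ediv_nonneg (by linarith [hψ0 a]) hpos.le, ?_⟩
    rw [Int.ediv_lt_iff_lt_mul hpos]; linarith [hψ1 a]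
  obtain ⟨j, hj, hjc⟩ := Finset.exists_le_card_fiber_of_nsmul_le_card_of_maps_to
    (b := (A.card : ℝ) / 6) hmaps ⟨0, by simp⟩ (by simp; linarith)
  refine ⟨A.filter (fun a => (6 * ψ a) / p = j), Finset.filter_subset _ _, by linarith, ψ, ?_⟩
  intro x y hx hy
  have hcell : ∀ a, a ∈ A.filter (fun a => (6 * ψ a) / p = j) →
      a ∈ A ∧ p * j ≤ 6 * ψ a ∧ 6 * ψ a < p * j + p := by
    intro a ha
    rw [Finset.mem_filter] at ha
    have h1 := Int.emod_add_mul_ediv (6 * ψ a) p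
    have h2 := Int.emod_nonneg (6 * ψ a) hpos.ne'
    have h3 := Int.emod_lt_of_pos (6 * ψ a) hpos
    rw [ha.2] at h1
    exact ⟨ha.1, by linarith, by linarith⟩
  have hD := hmem x y (fun i => (hcell _ (hx i)).1) (fun i => (hcell _ (hy i)).1)
  have hD' := hmem y x (fun i => (hcell _ (hy i)).1) (fun i => (hcell _ (hx i)).1)
  have hmod : (p : ℤ) ∣ (l * (∑ i, x i - ∑ i, y i)) - (∑ i, ψ (x i) - ∑ i, ψ (y i)) := by
    have : (l * (∑ i, x i - ∑ i, y i)) - (∑ i, ψ (x i) - ∑ i, ψ (y i))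
        = ∑ i, (l * x i - ψ (x i)) - ∑ i, (l * y i - ψ (y i)) := by
      simp only [Finset.sum_sub_distrib, Finset.mul_sum, mul_sub]; ring
    rw [this]
    refine dvd_sub (Finset.dvd_sum fun i _ => ?_) (Finset.dvd_sum fun i _ => ?_)
    · exact Int.dvd_self_sub_emod
    · exact Int.dvd_self_sub_emod
  have hlt : |∑ i, ψ (x i) - ∑ i, ψ (y i)| < p := by
    have hx' := fun i => hcell _ (hx i)
    have hy' := fun i => hcell _ (hy i)
    simp only [Fin.sum_univ_six]
    rw [abs_lt]
    have a0 := hx' 0; have a1 := hx' 1; have a2 := hx' 2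
    have a3 := hx' 3; have a4 := hx' 4; have a5 := hx' 5
    have b0 := hy' 0; have b1 := hy' 1; have b2 := hy' 2
    have b3 := hy' 3; have b4 := hy' 4; have b5 := hy' 5
    constructor <;> linarith
  set d := ∑ i, ψ (x i) - ∑ i, ψ (y i)
  constructor
  · intro hdv
    by_contra hne
    rcases le_or_gt 0 d with hd | hd
    · refine hl _ hD (sub_ne_zero.mpr hne) ?_
      have : (l * (∑ i, x i - ∑ i, y i)) % p = d := by
        rw [Int.emod_eq_emod_iff_emod_sub_eq_zero.mpr (Int.emod_eq_zero_of_dvd hmod)]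
        exact Int.emod_eq_of_lt hd (abs_lt.mp hlt).2
      rwa [this]
    · refine hl _ hD' (sub_ne_zero.mpr (Ne.symm hne)) ?_
      have : (l * (∑ i, y i - ∑ i, x i)) % p = -d := by
        have hmod' : (p : ℤ) ∣ (l * (∑ i, y i - ∑ i, x i)) - (-d) := by
          have e : (l * (∑ i, y i - ∑ i, x i)) - (-d) = -((l * (∑ i, x i - ∑ i, y i)) - d) := by
            ring
          rw [e]; exact (dvd_neg).mpr hmod
        rw [Int.emod_eq_emod_iff_emod_sub_eq_zero.mpr (Int.emod_eq_zero_of_dvd hmod')]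
        exact Int.emod_eq_of_lt (by linarith) (by linarith [(abs_lt.mp hlt).1])
      rw [this]; exact (dvd_neg).mpr hdv
  · intro heq
    rw [heq, sub_self, mul_zero, zero_sub, dvd_neg] at hmod
    rw [Int.eq_zero_of_abs_lt_dvd hmod hlt]
    exact dvd_zero _


theorem cl_cramer {k : ℕ} (w : Fin k → Fin k → ℤ) (y : Fin k → ℤ) :
    (Matrix.of w).det • y = ∑ i, (Matrix.of (Function.update w i y)).det • w i := by
  have h := Matrix.mulVec_cramer (Matrix.of w).transpose y
  rw [Matrix.det_transpose] at h
  rw [← h]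
  ext j
  simp only [Matrix.mulVec, dotProduct, Matrix.transpose_apply, Matrix.of_apply,
    Finset.sum_apply, Pi.smul_apply, smul_eq_mul, Matrix.cramer_transpose_apply]
  refine Finset.sum_congr rfl fun i _ => ?_
  rw [mul_comm]
  rfl

theorem cl_norm_box {k : ℕ} {E : Type*} [AddCommGroup E] (nrm : E → ℝ)
    (h0 : nrm 0 = 0)
    (hsub : ∀ u v, nrm (u + v) ≤ nrm u + nrm v)
    (hhom : ∀ (n : ℤ) u, nrm (n • u) = |(n : ℝ)| * nrm u)
    (R : ℝ) (hR : 0 ≤ R) (w : Fin k → E) (hw : ∀ i, nrm (w i) ≤ R)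
    (D : ℤ) (hD : D ≠ 0) (c : Fin k → ℤ) (hc : ∀ i, |c i| ≤ |D|) (x : E)
    (hx : D • x = ∑ i, c i • w i) : nrm x ≤ k * R := by
  have hDpos : (0 : ℝ) < |(D : ℝ)| := by
    rw [abs_pos]; exact_mod_cast hD
  have h1 : nrm (∑ i, c i • w i) ≤ ∑ i, nrm (c i • w i) :=
    Finset.le_sum_of_subadditive nrm h0.le hsub _ _
  have h2 : ∑ i, nrm (c i • w i) ≤ ∑ _i : Fin k, |(D : ℝ)| * R := by
    refine Finset.sum_le_sum fun i _ => ?_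
    rw [hhom]
    have : |(c i : ℝ)| ≤ |(D : ℝ)| := by exact_mod_cast hc i
    calc |(c i : ℝ)| * nrm (w i) ≤ |(c i : ℝ)| * R :=
          mul_le_mul_of_nonneg_left (hw i) (abs_nonneg _)
      _ ≤ _ := mul_le_mul_of_nonneg_right this hR
  rw [← hx, hhom] at h1
  simp only [Finset.sum_const, Finset.card_univ, Fintype.card_fin, nsmul_eq_mul] at h2
  have h3 : |(D : ℝ)| * nrm x ≤ |(D : ℝ)| * (k * R) := by linarith
  exact le_of_mul_le_mul_left h3 hDpos

theorem cl_det_count {k : ℕ} (nrm : (Fin k → ℤ) → ℝ)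
    (h0 : nrm 0 = 0)
    (hsub : ∀ u v, nrm (u + v) ≤ nrm u + nrm v)
    (hhom : ∀ (n : ℤ) u, nrm (n • u) = |(n : ℝ)| * nrm u)
    (R : ℝ) (hR : 0 ≤ R) (w : Fin k → Fin k → ℤ) (hw : ∀ i, nrm (w i) ≤ R)
    (U : Finset (Fin k → ℤ)) (hU : ∀ u, nrm u ≤ k * R → u ∈ U) :
    |(Matrix.of w).det| ≤ U.card := by
  classical
  by_cases hD : (Matrix.of w).det = 0
  · rw [hD]; simp
  have hli : LinearIndependent ℤ w := Matrix.linearIndependent_rows_of_det_ne_zero hD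
  have hcard := Submodule.natAbs_det_basis_change (Pi.basisFun ℤ (Fin k)) _ (Module.Basis.span hli)
  have hdet : (Pi.basisFun ℤ (Fin k)).det (Subtype.val ∘ ⇑(Module.Basis.span hli))
      = (Matrix.of w).det := by
    have : (Subtype.val ∘ ⇑(Module.Basis.span hli)) = w := by
      ext1 i; simp [Module.Basis.span_apply]
    rw [this, Pi.basisFun_det]; rfl
  rw [hdet] at hcard
  have hsurj : Function.Surjective (fun u : U =>
      (Submodule.Quotient.mk (p := Submodule.span ℤ (Set.range w)) (u : Fin k → ℤ))) := by
    intro q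
    obtain ⟨x, rfl⟩ := Submodule.Quotient.mk_surjective _ q
    set D := (Matrix.of w).det with hDdef
    set c : Fin k → ℤ := fun i => (Matrix.of (Function.update w i x)).det with hc
    have hx : D • x = ∑ i, c i • w i := cl_cramer w x
    have hx' : D • (x - ∑ i, (c i / D) • w i) = ∑ i, (c i % D) • w i := by
      rw [smul_sub, hx, Finset.smul_sum, ← Finset.sum_sub_distrib]
      refine Finset.sum_congr rfl fun i _ => ?_
      rw [smul_smul, ← sub_smul]
      congr 1
      have := Int.emod_add_mul_ediv (c i) D
      linarith
    refine ⟨⟨x - ∑ i, (c i / D) • w i, hU _ ?_⟩, ?_⟩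
    · refine cl_norm_box nrm h0 hsub hhom R hR w hw D hD _ ?_ _ hx'
      intro i
      rw [abs_of_nonneg (Int.emod_nonneg _ hD)]
      exact (Int.emod_lt_abs _ hD).le
    · rw [Submodule.Quotient.eq]
      have : x - ∑ i, (c i / D) • w i - x = - ∑ i, (c i / D) • w i := by abel
      simp only [this]
      refine Submodule.neg_mem _ (Submodule.sum_mem _ fun i _ => Submodule.smul_mem _ _ ?_)
      exact Submodule.subset_span ⟨i, rfl⟩
  have := Nat.card_le_card_of_surjective _ hsurj
  rw [← hcard, Nat.card_eq_fintype_card, Fintype.card_coe] at this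
  rw [Int.abs_eq_natAbs]
  exact_mod_cast this

theorem cl_comb {k : ℕ} {E : Type*} [AddCommGroup E] (nrm : E → ℝ)
    (h0 : nrm 0 = 0)
    (hsub : ∀ u v, nrm (u + v) ≤ nrm u + nrm v)
    (hhom : ∀ (n : ℤ) u, nrm (n • u) = |(n : ℝ)| * nrm u)
    (R T : ℝ) (hR : 0 ≤ R) (hRT : R ≤ T) (w : Fin k → E) (hw : ∀ i, nrm (w i) ≤ R)
    (f : E → ℤ)
    (hf : ∀ u v, nrm u ≤ T → nrm v ≤ T → nrm (u + v) ≤ T → f (u + v) = f u + f v)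
    (δ : Fin k → ℤ) (hδ : ∀ i, δ i = -1 ∨ δ i = 0 ∨ δ i = 1) (z : E)
    (s : Finset (Fin k)) (hz : nrm z + s.card * R ≤ T) :
    nrm (z + ∑ i ∈ s, δ i • w i) ≤ nrm z + s.card * R ∧
    f (z + ∑ i ∈ s, δ i • w i) = f z + ∑ i ∈ s, δ i * f (w i) := by
  classical
  have hT : 0 ≤ T := hR.trans hRT
  have hf0 : f 0 = 0 := by
    have := hf 0 0 (by rw [h0]; exact hT) (by rw [h0]; exact hT) (by simp [h0]; exact hT)
    simp at this; exact this
  have hneg : ∀ u, nrm (-u) = nrm u := by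
    intro u; have := hhom (-1) u; simpa using this
  have hfneg : ∀ u, nrm u ≤ T → f (-u) = - f u := by
    intro u hu
    have := hf u (-u) hu (by rw [hneg]; exact hu) (by simp [h0]; exact hT)
    rw [add_neg_cancel, hf0] at this
    linarith
  have hdw : ∀ i, nrm (δ i • w i) ≤ R ∧ f (δ i • w i) = δ i * f (w i) := by
    intro i
    rcases hδ i with h | h | h
    · rw [h]; simp only [neg_smul, one_smul, hneg]
      exact ⟨hw i, by rw [hfneg _ ((hw i).trans hRT)]; ring⟩
    · rw [h]; simp [h0, hR, hf0]
    · rw [h]; simp [hw i]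
  induction s using Finset.induction_on with
  | empty => simp
  | insert a s ha ih =>
    rw [Finset.card_insert_of_notMem ha] at hz ⊢
    push_cast at hz ⊢
    have hz' : nrm z + s.card * R ≤ T := by linarith
    obtain ⟨ih1, ih2⟩ := ih hz'
    rw [Finset.sum_insert ha, Finset.sum_insert ha]
    have e : z + (δ a • w a + ∑ i ∈ s, δ i • w i) = (z + ∑ i ∈ s, δ i • w i) + δ a • w a := by abel
    rw [e]
    have hn : nrm ((z + ∑ i ∈ s, δ i • w i) + δ a • w a) ≤ nrm z + (s.card + 1) * R := by
      have := hsub (z + ∑ i ∈ s, δ i • w i) (δ a • w a)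
      have := (hdw a).1
      linarith
    refine ⟨hn, ?_⟩
    rw [hf _ _ (ih1.trans hz') ((hdw a).1.trans hRT) (hn.trans hz), ih2, (hdw a).2]
    ring

theorem cl_extend {k : ℕ} {E : Type*} [AddCommGroup E]
    (nrm : E → ℝ)
    (h0 : nrm 0 = 0)
    (hsub : ∀ u v, nrm (u + v) ≤ nrm u + nrm v)
    (hhom : ∀ (n : ℤ) u, nrm (n • u) = |(n : ℝ)| * nrm u)
    (R T : ℝ) (hR : 0 ≤ R) (hRT : (2 * k + 1) * R ≤ T) (w : Fin k → E) (hw : ∀ i, nrm (w i) ≤ R)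
    (f : E → ℤ)
    (hf : ∀ u v, nrm u ≤ T → nrm v ≤ T → nrm (u + v) ≤ T → f (u + v) = f u + f v)
    (D : ℤ) (hD : 0 < D) (n : Fin k → ℤ) (hn : ∀ i, |n i| ≤ D)
    (y : E) (hy : nrm y ≤ R) (hyn : D • y = ∑ i, n i • w i) :
    D * f y = ∑ i, n i * f (w i) := by
  have hkR : 0 ≤ k * R := by positivity
  have hT : 0 ≤ T := by nlinarith
  have hf0 : f 0 = 0 := by
    have := hf 0 0 (by rw [h0]; exact hT) (by rw [h0]; exact hT) (by simp [h0]; exact hT)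
    simp at this; exact this
  set z : ℕ → E := fun t => (t : ℤ) • y - ∑ i, ((t * n i) / D) • w i with hz
  have hzn : ∀ t, nrm (z t) ≤ k * R := by
    intro t
    refine cl_norm_box nrm h0 hsub hhom R hR w hw D hD.ne' (fun i => (t * n i) % D) ?_ _ ?_
    · intro i
      rw [abs_of_nonneg (Int.emod_nonneg _ hD.ne')]
      exact (Int.emod_lt_abs _ hD.ne').le
    · simp only [hz]
      rw [smul_sub, smul_comm, hyn, Finset.smul_sum, Finset.smul_sum, ← Finset.sum_sub_distrib]
      refine Finset.sum_congr rfl fun i _ => ?_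
      rw [smul_smul, smul_smul, ← sub_smul]
      congr 1
      have := Int.emod_add_mul_ediv (t * n i) D
      linarith
  have hmain : ∀ t : ℕ, f (z t) = t * f y - ∑ i, ((t * n i) / D) * f (w i) := by
    intro t
    induction t with
    | zero => simp [hz, hf0]
    | succ t ih =>
      set δ : Fin k → ℤ := fun i => (t * n i) / D - (((t + 1 : ℕ) : ℤ) * n i) / D with hδ
      have hδ' : ∀ i, δ i = -1 ∨ δ i = 0 ∨ δ i = 1 := by
        intro i
        have h1 := Int.emod_add_mul_ediv (t * n i) D
        have h2 := Int.emod_add_mul_ediv (((t + 1 : ℕ) : ℤ) * n i) D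
        have h3 := Int.emod_nonneg (t * n i) hD.ne'
        have h4 := Int.emod_nonneg (((t + 1 : ℕ) : ℤ) * n i) hD.ne'
        have h5 := Int.emod_lt_of_pos (t * n i) hD
        have h6 := Int.emod_lt_of_pos (((t + 1 : ℕ) : ℤ) * n i) hD
        have h7 := abs_le.mp (hn i)
        have h8 : D * δ i = (t * n i - (t * n i) % D) -
            (((t + 1 : ℕ) : ℤ) * n i - (((t + 1 : ℕ) : ℤ) * n i) % D) := by
          simp only [hδ]; rw [mul_sub]; linarith
        have h9 : ((t + 1 : ℕ) : ℤ) * n i = t * n i + n i := by push_cast; ring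
        have h10 : D * δ i < D * 2 := by rw [h8]; linarith
        have h11 : D * (-2) < D * δ i := by rw [h8]; linarith
        have h12 := lt_of_mul_lt_mul_left h10 hD.le
        have h13 := lt_of_mul_lt_mul_left h11 hD.le
        omega
      have hstep : z (t + 1) = (z t + y) + ∑ i, δ i • w i := by
        simp only [hz, hδ, sub_smul, Finset.sum_sub_distrib]
        push_cast
        rw [add_smul, one_smul]
        abel
      have hb1 : nrm (z t + y) ≤ (k + 1) * R := by
        have := hsub (z t) y
        have := hzn t
        linarith
      have hc := cl_comb nrm h0 hsub hhom R T hR (by nlinarith) w hw f hf δ hδ' (z t + y)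
        Finset.univ (by simp; linarith)
      rw [hstep, hc.2, hf _ _ ((hzn t).trans (by linarith)) (hy.trans (by linarith))
        (hb1.trans (by linarith)), ih]
      simp only [hδ, sub_mul, Finset.sum_sub_distrib]
      push_cast
      ring
  have hlast := hmain D.toNat
  have hDt : ((D.toNat : ℕ) : ℤ) = D := Int.toNat_of_nonneg hD.le
  have hq : ∀ i, D * n i / D = n i := fun i => Int.mul_ediv_cancel_left _ hD.ne'
  have hzD : z D.toNat = 0 := by
    simp only [hz, hDt, hq]
    rw [hyn, sub_self]
  rw [hzD, hf0, hDt] at hlast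
  simp only [hq] at hlast
  linarith


theorem cl_vertex {V : Type*} [AddCommGroup V] [Module ℚ V] [FiniteDimensional ℚ V]
    (P : Finset V) (hP : Submodule.span ℚ (P : Set V) = ⊤)
    (l₀ : V →ₗ[ℚ] ℚ) (hl₀ : ∀ y ∈ P, 1 ≤ l₀ y) :
    ∃ l : V →ₗ[ℚ] ℚ, (∀ y ∈ P, 1 ≤ l y) ∧
      Submodule.span ℚ {y | y ∈ P ∧ l y = 1} = ⊤ := by
  classical
  set S : Set ℕ := {m | ∃ l : V →ₗ[ℚ] ℚ, (∀ y ∈ P, 1 ≤ l y) ∧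
    m = Module.finrank ℚ V - Module.finrank ℚ (Submodule.span ℚ {y | y ∈ P ∧ l y = 1})} with hS
  have hne : S.Nonempty := ⟨_, l₀, hl₀, rfl⟩
  obtain ⟨l, hl, hm⟩ := Nat.sInf_mem hne
  refine ⟨l, hl, ?_⟩
  by_contra htop
  obtain ⟨g, hg0, hg⟩ := Submodule.exists_le_ker_of_lt_top _ (lt_top_iff_ne_top.mpr htop)
  -- get a functional vanishing on the tight set and negative somewhere on `P`
  have hneg : ∃ g' : V →ₗ[ℚ] ℚ, (∀ y ∈ P, l y = 1 → g' y = 0) ∧ ∃ y ∈ P, g' y < 0 := by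
    have hgt : ∀ y ∈ P, l y = 1 → g y = 0 := fun y hy h1 =>
      LinearMap.mem_ker.mp (hg (Submodule.subset_span ⟨hy, h1⟩))
    have : ∃ y ∈ P, g y ≠ 0 := by
      by_contra hcon
      push Not at hcon
      apply hg0
      refine LinearMap.ext_on hP ?_
      intro y hy
      simpa using hcon y hy
    obtain ⟨y, hy, hy0⟩ := this
    rcases lt_or_gt_of_ne hy0 with h | h
    · exact ⟨g, hgt, y, hy, h⟩
    · exact ⟨-g, fun y hy h1 => by simp [hgt y hy h1], y, hy, by simpa using h⟩
  obtain ⟨g', hg't, y₁, hy₁, hy₁n⟩ := hneg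
  obtain ⟨y₀, hy₀, hmin⟩ := Finset.exists_min_image (P.filter (fun y => g' y < 0))
    (fun y => (l y - 1) / (- g' y)) ⟨y₁, Finset.mem_filter.mpr ⟨hy₁, hy₁n⟩⟩
  rw [Finset.mem_filter] at hy₀
  set t := (l y₀ - 1) / (- g' y₀) with ht
  have ht0 : 0 ≤ t := div_nonneg (by linarith [hl y₀ hy₀.1]) (by linarith [hy₀.2])
  set l' : V →ₗ[ℚ] ℚ := l + t • g' with hl'
  have hl'ap : ∀ y, l' y = l y + t * g' y := fun y => by simp [hl']
  have hfeas : ∀ y ∈ P, 1 ≤ l' y := by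
    intro y hy
    rw [hl'ap]
    by_cases hs : g' y < 0
    · have h1 := hmin y (Finset.mem_filter.mpr ⟨hy, hs⟩)
      rw [le_div_iff₀ (by linarith)] at h1
      linarith
    · push Not at hs
      nlinarith [hl y hy, mul_nonneg ht0 hs]
  have hy₀t : l' y₀ = 1 := by
    rw [hl'ap]
    have : t * (- g' y₀) = l y₀ - 1 := div_mul_cancel₀ _ (by linarith [hy₀.2])
    linarith
  have hlt : Submodule.span ℚ {y | y ∈ P ∧ l y = 1} < Submodule.span ℚ {y | y ∈ P ∧ l' y = 1} := by
    refine lt_of_le_of_ne (Submodule.span_mono ?_) ?_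
    · rintro y ⟨hy, h1⟩
      exact ⟨hy, by rw [hl'ap, hg't y hy h1, h1]; simp⟩
    · intro heq
      have h1 : y₀ ∈ Submodule.span ℚ {y | y ∈ P ∧ l y = 1} := by
        rw [heq]; exact Submodule.subset_span ⟨hy₀.1, hy₀t⟩
      have h2 : Submodule.span ℚ {y | y ∈ P ∧ l y = 1} ≤ LinearMap.ker g' :=
        Submodule.span_le.mpr fun y hy => LinearMap.mem_ker.mpr (hg't y hy.1 hy.2)
      have h3 := LinearMap.mem_ker.mp (h2 h1)
      linarith [hy₀.2]
  have hr := Submodule.finrank_lt_finrank_of_lt hlt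
  have hle := Submodule.finrank_le (Submodule.span ℚ {y | y ∈ P ∧ l' y = 1})
  have hinf : sInf S ≤ _ := Nat.sInf_le ⟨l', hfeas, rfl⟩
  omega

/-- coordinatewise cast -/
def clCast (k : ℕ) (x : Fin k → ℤ) : Fin k → ℚ := fun i => (x i : ℚ)

theorem clCast_add {k : ℕ} (x y : Fin k → ℤ) : clCast k (x + y) = clCast k x + clCast k y := by
  ext i; simp [clCast]

theorem clCast_smul {k : ℕ} (n : ℤ) (x : Fin k → ℤ) :
    clCast k (n • x) = (n : ℚ) • clCast k x := by
  ext i; simp [clCast]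

theorem clCast_sum {k : ℕ} {ι : Type*} (s : Finset ι) (x : ι → Fin k → ℤ) :
    clCast k (∑ i ∈ s, x i) = ∑ i ∈ s, clCast k (x i) := by
  ext i; simp [clCast]

theorem cl_tuple {k : ℕ} (S : Set (Fin k → ℤ))
    (hS : Submodule.span ℚ (clCast k '' S) = ⊤) :
    ∃ w : Fin k → Fin k → ℤ, (∀ i, w i ∈ S) ∧ (Matrix.of w).det ≠ 0 := by
  obtain ⟨v, hvS, -, hvli⟩ := Submodule.exists_fun_fin_finrank_span_eq ℚ (clCast k '' S)
  have hfr : Module.finrank ℚ (Submodule.span ℚ (clCast k '' S)) = k := by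
    rw [hS, finrank_top]; simp
  set e : Fin k ≃ Fin (Module.finrank ℚ (Submodule.span ℚ (clCast k '' S))) :=
    finCongr hfr.symm
  choose w hw hwv using hvS
  refine ⟨fun i => w (e i), fun i => hw _, ?_⟩
  have hli : LinearIndependent ℚ (fun i => v (e i)) := hvli.comp e e.injective
  have hunit : IsUnit (Matrix.of (fun i => v (e i))) :=
    Matrix.linearIndependent_rows_iff_isUnit.mp hli
  rw [Matrix.isUnit_iff_isUnit_det] at hunit
  intro hdet
  apply hunit.ne_zero
  have h2 := Int.cast_det (R := ℚ) (Matrix.of (fun i => w (e i)))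
  rw [hdet] at h2
  have h3 : (Matrix.of (fun i => w (e i))).map (fun x : ℤ => (x : ℚ))
      = Matrix.of (fun i => v (e i)) := by
    ext i j
    simp only [Matrix.map_apply, Matrix.of_apply, ← hwv]
    rfl
  rw [h3] at h2
  simpa using h2.symm

theorem cl_core {k : ℕ} (nrm : (Fin k → ℤ) → ℝ)
    (h0 : nrm 0 = 0)
    (hsub : ∀ u v, nrm (u + v) ≤ nrm u + nrm v)
    (hhom : ∀ (n : ℤ) u, nrm (n • u) = |(n : ℝ)| * nrm u)
    (R T : ℝ) (hR : 0 ≤ R) (hRT : (2 * k + 1) * R ≤ T)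
    (f : (Fin k → ℤ) → ℤ)
    (hf : ∀ u v, nrm u ≤ T → nrm v ≤ T → nrm (u + v) ≤ T → f (u + v) = f u + f v)
    (hfi : ∀ u, nrm u ≤ T → f u = 0 → u = 0)
    (U : Finset (Fin k → ℤ)) (hU : ∀ u, nrm u ≤ T → u ∈ U)
    (hspan : Submodule.span ℤ {u | nrm u ≤ R} = ⊤) :
    ∃ G : (Fin k → ℤ) →ₗ[ℤ] ℤ, ∀ u, nrm u ≤ R →
      (0 < f u → 0 < G u) ∧ |G u| ≤ k * U.card := by
  classical
  have hkR : 0 ≤ k * R := by positivity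
  have hT : 0 ≤ T := by nlinarith
  have hRT' : R ≤ T := by nlinarith
  have hf0 : f 0 = 0 := by
    have := hf 0 0 (by rw [h0]; exact hT) (by rw [h0]; exact hT) (by simp [h0]; exact hT)
    simp at this; exact this
  have hneg : ∀ u, nrm (-u) = nrm u := by
    intro u; have := hhom (-1) u; simpa using this
  have hfneg : ∀ u, nrm u ≤ T → f (-u) = - f u := by
    intro u hu
    have := hf u (-u) hu (by rw [hneg]; exact hu) (by simp [h0]; exact hT)
    rw [add_neg_cancel, hf0] at this
    linarith
  -- the positive part spans
  set Pz : Set (Fin k → ℤ) := {u | nrm u ≤ R ∧ 0 < f u} with hPz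
  have hPspan : Submodule.span ℚ (clCast k '' Pz) = ⊤ := by
    have h1 : ∀ u : Fin k → ℤ, u ∈ Submodule.span ℤ {u | nrm u ≤ R} →
        clCast k u ∈ Submodule.span ℚ (clCast k '' Pz) := by
      intro u hu
      induction hu using Submodule.span_induction with
      | mem u hu =>
        have hu' : nrm u ≤ R := hu
        rcases lt_trichotomy (f u) 0 with h | h | h
        · have hm : clCast k (-u) ∈ Submodule.span ℚ (clCast k '' Pz) :=
            Submodule.subset_span ⟨-u, ⟨by rw [hneg]; exact hu',
              by rw [hfneg u (hu'.trans hRT')]; linarith⟩, rfl⟩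
          have : clCast k u = - clCast k (-u) := by ext i; simp [clCast]
          rw [this]; exact Submodule.neg_mem _ hm
        · have := hfi u (hu'.trans hRT') h
          have h0' : clCast k u = 0 := by rw [this]; ext i; simp [clCast]
          rw [h0']; exact Submodule.zero_mem _
        · exact Submodule.subset_span ⟨u, ⟨hu', h⟩, rfl⟩
      | zero =>
        have h0' : clCast k 0 = 0 := by ext i; simp [clCast]
        rw [h0']; exact Submodule.zero_mem _
      | add x y _ _ hx hy => rw [clCast_add]; exact Submodule.add_mem _ hx hy
      | smul a x _ hx => rw [clCast_smul]; exact Submodule.smul_mem _ _ hx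
    rw [eq_top_iff, ← (Pi.basisFun ℚ (Fin k)).span_eq, Submodule.span_le]
    rintro _ ⟨i, rfl⟩
    have h2 := h1 (Pi.single i 1) (by rw [hspan]; trivial)
    have h3 : clCast k (Pi.single i 1) = Pi.basisFun ℚ (Fin k) i := by
      ext j
      simp only [clCast, Pi.basisFun_apply, Pi.single_apply]
      split_ifs <;> simp
    rw [h3] at h2
    exact h2
  -- a tuple of maximal determinant
  obtain ⟨w₀, hw₀, hw₀d⟩ := cl_tuple Pz hPspan
  set B : Finset (Fin k → ℤ) := U.filter (fun u => nrm u ≤ R) with hB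
  have hBmem : ∀ u, u ∈ B ↔ nrm u ≤ R := by
    intro u
    simp only [hB, Finset.mem_filter, and_iff_right_iff_imp]
    intro h; exact hU u (h.trans hRT')
  obtain ⟨w, hw, hwmax⟩ := Finset.exists_max_image (Fintype.piFinset (fun _ : Fin k => B))
    (fun w => |(Matrix.of w).det|)
    ⟨w₀, Fintype.mem_piFinset.mpr fun i => (hBmem _).mpr (hw₀ i).1⟩
  rw [Fintype.mem_piFinset] at hw
  have hwR : ∀ i, nrm (w i) ≤ R := fun i => (hBmem _).mp (hw i)
  have hDne : (Matrix.of w).det ≠ 0 := by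
    have := hwmax w₀ (Fintype.mem_piFinset.mpr fun i => (hBmem _).mpr (hw₀ i).1)
    intro h
    rw [h, abs_zero] at this
    exact hw₀d (abs_nonpos_iff.mp this)
  -- the linear extension
  have hFex : ∃ F : (Fin k → ℚ) →ₗ[ℚ] ℚ, ∀ i, F (clCast k (w i)) = f (w i) := by
    have hli : LinearIndependent ℚ (fun i => clCast k (w i)) := by
      have hd : (Matrix.of (fun i => clCast k (w i))).det ≠ 0 := by
        have h2 := Int.cast_det (R := ℚ) (Matrix.of w)
        have h3 : (Matrix.of w).map (fun x : ℤ => (x : ℚ))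
            = Matrix.of (fun i => clCast k (w i)) := by
          ext i j; simp [clCast]
        rw [h3] at h2
        rw [← h2]; exact_mod_cast hDne
      exact Matrix.linearIndependent_rows_of_det_ne_zero hd
    obtain ⟨F, hF⟩ := (LinearMap.exists_extend
      ((Module.Basis.span hli).constr ℚ (fun i => (f (w i) : ℚ))))
    refine ⟨F, fun i => ?_⟩
    have h1 := (Module.Basis.span hli).constr_basis ℚ (fun i => (f (w i) : ℚ)) i
    rw [← hF] at h1
    simpa [Module.Basis.span_apply] using h1
  obtain ⟨F, hF⟩ := hFex
  have hFf : ∀ y, nrm y ≤ R → F (clCast k y) = f y := by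
    intro y hy
    set D := (Matrix.of w).det with hD
    set n : Fin k → ℤ := fun i => (Matrix.of (Function.update w i y)).det with hn
    have hid : D • y = ∑ i, n i • w i := cl_cramer w y
    have hnb : ∀ i, |n i| ≤ |D| := by
      intro i
      refine hwmax (Function.update w i y) (Fintype.mem_piFinset.mpr fun j => ?_)
      by_cases hj : j = i
      · subst hj; simpa using (hBmem _).mpr hy
      · simpa [hj] using hw j
    have hext : D * f y = ∑ i, n i * f (w i) := by
      rcases lt_or_gt_of_ne hDne with h | h
      · have := cl_extend nrm h0 hsub hhom R T hR hRT w hwR f hf (-D) (by linarith)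
          (fun i => - n i) (fun i => by rw [abs_neg, ← abs_of_neg h]; exact hnb i) y hy
          (by simp only [neg_smul, Finset.sum_neg_distrib, hid])
        simp only [neg_mul, Finset.sum_neg_distrib] at this
        linarith
      · exact cl_extend nrm h0 hsub hhom R T hR hRT w hwR f hf D h n
          (fun i => (hnb i).trans_eq (abs_of_pos h)) y hy hid
    have h1 : F (clCast k (D • y)) = F (clCast k (∑ i, n i • w i)) := by rw [hid]
    rw [clCast_smul, clCast_sum, map_smul, map_sum] at h1
    simp only [clCast_smul, map_smul, hF, smul_eq_mul] at h1
    have h2 : (D : ℚ) * f y = ∑ i, (n i : ℚ) * f (w i) := by exact_mod_cast hext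
    rw [← h2] at h1
    exact mul_left_cancel₀ (by exact_mod_cast hDne) h1
  -- the vertex
  set P : Finset (Fin k → ℚ) := (B.filter (fun u => 0 < f u)).image (clCast k) with hP
  have hPeq : (P : Set (Fin k → ℚ)) = clCast k '' Pz := by
    ext v
    simp [hP, hPz, hBmem]
  obtain ⟨l, hl, hltop⟩ := cl_vertex P (by rw [hPeq]; exact hPspan) F (by
    intro v hv
    rw [← Finset.mem_coe, hPeq] at hv
    obtain ⟨u, ⟨hu, hfu⟩, rfl⟩ := hv
    rw [hFf u hu]
    exact_mod_cast hfu)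
  obtain ⟨y, hy, hyd⟩ := cl_tuple {u | u ∈ Pz ∧ l (clCast k u) = 1} (by
    rw [← hltop]
    congr 1
    ext v
    constructor
    · rintro ⟨u, ⟨hu, h1⟩, rfl⟩
      refine ⟨?_, h1⟩
      rw [← Finset.mem_coe, hPeq]; exact ⟨u, hu, rfl⟩
    · rintro ⟨hv, h1⟩
      rw [← Finset.mem_coe, hPeq] at hv
      obtain ⟨u, hu, rfl⟩ := hv
      exact ⟨u, ⟨hu, h1⟩, rfl⟩)
  set D := (Matrix.of y).det with hD
  set G₀ : (Fin k → ℤ) →ₗ[ℤ] ℤ := ∑ i,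
    (Matrix.detRowAlternating (n := Fin k) (R := ℤ)).toMultilinearMap.toLinearMap y i with hG₀
  have hG₀ap : ∀ x, G₀ x = ∑ i, (Matrix.of (Function.update y i x)).det := by
    intro x
    simp only [hG₀, LinearMap.sum_apply]
    rfl
  have hG₀l : ∀ x, (G₀ x : ℚ) = D * l (clCast k x) := by
    intro x
    have h1 : l (clCast k (D • x)) =
        l (clCast k (∑ i, (Matrix.of (Function.update y i x)).det • y i)) := by
      rw [hD, cl_cramer y x]
    rw [clCast_smul, clCast_sum, map_smul, map_sum] at h1
    simp only [clCast_smul, map_smul, (hy _).2, smul_eq_mul, mul_one] at h1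
    rw [h1, hG₀ap]
    push_cast
    rfl
  refine ⟨D.sign • G₀, fun u hu => ⟨fun hfu => ?_, ?_⟩⟩
  · have h1 : 1 ≤ l (clCast k u) := hl _ (by
      rw [← Finset.mem_coe, hPeq]; exact ⟨u, ⟨hu, hfu⟩, rfl⟩)
    have h2 : (((D.sign • G₀) u : ℤ) : ℚ) = |(D : ℚ)| * l (clCast k u) := by
      rw [LinearMap.smul_apply, smul_eq_mul]
      push_cast
      rw [hG₀l, ← mul_assoc]
      congr 1
      have := Int.sign_mul_self_eq_abs D
      exact_mod_cast this
    have h3 : (0 : ℚ) < |(D : ℚ)| := abs_pos.mpr (by exact_mod_cast hyd)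
    have h4 : (0 : ℚ) < (((D.sign • G₀) u : ℤ) : ℚ) := by rw [h2]; positivity
    exact_mod_cast h4
  · rw [LinearMap.smul_apply, smul_eq_mul, abs_mul]
    have hs : |D.sign| ≤ 1 := by
      rcases Int.sign_trichotomy D with h | h | h <;> simp [h]
    have hb : |G₀ u| ≤ k * U.card := by
      rw [hG₀ap]
      refine (Finset.abs_sum_le_sum_abs _ _).trans ?_
      have : ∀ i ∈ (Finset.univ : Finset (Fin k)),
          |(Matrix.of (Function.update y i u)).det| ≤ (U.card : ℤ) := by
        intro i _
        refine cl_det_count nrm h0 hsub hhom R hR _ ?_ U (fun v hv => hU v (by nlinarith))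
        intro j
        by_cases hj : j = i
        · subst hj; simpa using hu
        · simpa [hj] using (hy j).1.1
      refine (Finset.sum_le_card_nsmul _ _ _ this).trans ?_
      simp
    nlinarith [abs_nonneg (G₀ u), abs_nonneg D.sign]


theorem cl_lattice {ι : Type*} [Fintype ι] (L : Submodule ℤ (ι → ℤ)) (R T : ℝ) (hR : 0 ≤ R)
    (hRT : (2 * (Fintype.card ι : ℝ) + 1) * R ≤ T) (f : (ι → ℤ) → ℤ)
    (hf : ∀ u ∈ L, ∀ v ∈ L, ‖u‖ ≤ T → ‖v‖ ≤ T → ‖u + v‖ ≤ T → f (u + v) = f u + f v)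
    (hfi : ∀ u ∈ L, ‖u‖ ≤ T → f u = 0 → u = 0)
    (U : Finset (ι → ℤ)) (hU : ∀ u ∈ L, ‖u‖ ≤ T → u ∈ U) :
    ∃ (H : Submodule ℤ (ι → ℤ)) (G : (ι → ℤ) → ℤ),
      (∀ u ∈ L, ‖u‖ ≤ R → u ∈ H) ∧
      (∀ u ∈ H, ∀ v ∈ H, G (u + v) = G u + G v) ∧
      (∀ u ∈ H, G (-u) = - G u) ∧
      ∀ u ∈ L, ‖u‖ ≤ R → (0 < f u → 0 < G u) ∧ |G u| ≤ Fintype.card ι * U.card := by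
  classical
  set s : Set (ι → ℤ) := {u | u ∈ L ∧ ‖u‖ ≤ R} with hs
  set H := Submodule.span ℤ s with hH
  have hHL : H ≤ L := Submodule.span_le.mpr fun u hu => hu.1
  set k := Module.finrank ℤ H with hk
  have hkι : k ≤ Fintype.card ι := by
    have := Submodule.finrank_le H
    rwa [Module.finrank_fintype_fun_eq_card] at this
  let e : H ≃ₗ[ℤ] (Fin k → ℤ) := (Module.finBasis ℤ H).equivFun
  have hinj : Function.Injective (fun x : Fin k → ℤ => ((e.symm x : H) : ι → ℤ)) :=
    fun x y h => e.symm.injective (Subtype.ext h)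
  set U' : Finset (Fin k → ℤ) := U.preimage (fun x : Fin k → ℤ => ((e.symm x : H) : ι → ℤ))
    hinj.injOn with hU'
  have hU'c : U'.card ≤ U.card := by
    refine Finset.card_le_card_of_injOn (fun x : Fin k → ℤ => ((e.symm x : H) : ι → ℤ)) ?_
      hinj.injOn
    intro x hx
    simpa [hU'] using hx
  have hkR : (2 * (k : ℝ) + 1) * R ≤ T := by
    have : (k : ℝ) ≤ Fintype.card ι := by exact_mod_cast hkι
    nlinarith
  have hspan : Submodule.span ℤ {x : Fin k → ℤ | ‖((e.symm x : H) : ι → ℤ)‖ ≤ R} = ⊤ := by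
    have h1 : Submodule.span ℤ ((↑) ⁻¹' s : Set H) = ⊤ := Submodule.span_span_coe_preimage
    have h2 := congrArg (Submodule.map (e : H →ₗ[ℤ] (Fin k → ℤ))) h1
    rw [Submodule.map_span, Submodule.map_top, LinearEquiv.range] at h2
    rw [eq_top_iff, ← h2]
    refine Submodule.span_mono ?_
    rintro _ ⟨u, hu, rfl⟩
    simpa using hu.2
  obtain ⟨G, hG⟩ := cl_core (fun x : Fin k → ℤ => ‖((e.symm x : H) : ι → ℤ)‖) (by simp)
    (by intro u v; rw [map_add, Submodule.coe_add]; exact norm_add_le _ _)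
    (by
      intro n u
      rw [map_smul, Submodule.coe_smul, norm_smul, Int.norm_eq_abs])
    R T hR hkR (fun x => f (e.symm x : H))
    (by
      intro u v hu hv huv
      simp only [map_add, Submodule.coe_add] at huv ⊢
      exact hf _ (hHL (e.symm u).2) _ (hHL (e.symm v).2) hu hv huv)
    (by
      intro u hu h0
      have := hfi _ (hHL (e.symm u).2) hu h0
      exact e.symm.injective (Subtype.ext (by simpa using this)))
    U' (by
      intro u hu
      rw [hU', Finset.mem_preimage]
      exact hU _ (hHL (e.symm u).2) hu) hspan
  refine ⟨H, fun u => if h : u ∈ H then G (e ⟨u, h⟩) else 0,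
    fun u hu hR => Submodule.subset_span ⟨hu, hR⟩, ?_, ?_, ?_⟩
  · intro u hu v hv
    simp only [dif_pos hu, dif_pos hv, dif_pos (H.add_mem hu hv)]
    rw [← map_add, ← map_add]; rfl
  · intro u hu
    simp only [dif_pos hu, dif_pos (H.neg_mem hu)]
    rw [← map_neg, ← map_neg]; rfl
  · intro u hu huR
    have huH : u ∈ H := Submodule.subset_span ⟨hu, huR⟩
    simp only [dif_pos huH]
    have hee : ((e.symm (e ⟨u, huH⟩) : H) : ι → ℤ) = u := by rw [e.symm_apply_apply]
    have := hG (e ⟨u, huH⟩) (by rw [hee]; exact huR)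
    rw [hee] at this
    refine ⟨this.1, this.2.trans ?_⟩
    have h1 : (k : ℤ) ≤ Fintype.card ι := by exact_mod_cast hkι
    have h2 : (U'.card : ℤ) ≤ U.card := by exact_mod_cast hU'c
    exact mul_le_mul h1 h2 (Int.natCast_nonneg _) (Int.natCast_nonneg _)


theorem cl_key_order (A' : Finset ℤ) (φ : ℤ → ℤ)
    (h : ∀ a ∈ A', ∀ b ∈ A', ∀ c ∈ A', ∀ d ∈ A', c + d < a + b → φ c + φ d < φ a + φ b)
    (h' : ∀ a ∈ A', ∀ b ∈ A', ∀ c ∈ A', ∀ d ∈ A', c + d = a + b → φ c + φ d = φ a + φ b) :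
    IsOrderPresFreiman2Iso A' φ := by
  refine ⟨fun a ha b hb => ?_, fun a ha b hb c hc d hd => ?_⟩
  · constructor
    · intro hab
      have := h b hb b hb a ha a ha (by linarith)
      linarith
    · intro hab
      by_contra hcon
      rcases lt_or_eq_of_le (not_lt.mp hcon) with h1 | h1
      · have := h a ha a ha b hb b hb (by linarith)
        linarith
      · rw [h1] at hab; exact lt_irrefl _ hab
  · constructor
    · intro he
      exact h' c hc d hd a ha b hb he
    · intro he
      rcases lt_trichotomy (a + b) (c + d) with h1 | h1 | h1
      · have := h c hc d hd a ha b hb h1; linarith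
      · exact h1
      · have := h a ha b hb c hc d hd h1; linarith

/-- `z` is the value of a signed combination representing `x`. -/
def ClRep (N : ℕ) (A₁ : Finset ℤ) (ψ : ℤ → ℤ) (x : ZMod N) (z : ℤ) : Prop :=
  ∃ a ∈ A₁, ∃ b ∈ A₁, ∃ c ∈ A₁, ∃ d ∈ A₁,
    x = (ψ a : ZMod N) + ψ b - ψ c - ψ d ∧ z = a + b - c - d

theorem cl_rep_add (N : ℕ) (A₁ : Finset ℤ) (ψ : ℤ → ℤ)
    (hiso : ∀ x y : Fin 6 → ℤ, (∀ i, x i ∈ A₁) → (∀ i, y i ∈ A₁) →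
        ((N : ℤ) ∣ ∑ i, ψ (x i) - ∑ i, ψ (y i) ↔ ∑ i, x i = ∑ i, y i))
    (x₁ x₂ x₃ : ZMod N) (z₁ z₂ z₃ : ℤ) (h₁ : ClRep N A₁ ψ x₁ z₁) (h₂ : ClRep N A₁ ψ x₂ z₂)
    (h₃ : ClRep N A₁ ψ x₃ z₃) : x₃ = x₁ + x₂ ↔ z₃ = z₁ + z₂ := by
  obtain ⟨a, ha, b, hb, c, hc, d, hd, rfl, rfl⟩ := h₁
  obtain ⟨a', ha', b', hb', c', hc', d', hd', rfl, rfl⟩ := h₂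
  obtain ⟨a'', ha'', b'', hb'', c'', hc'', d'', hd'', rfl, rfl⟩ := h₃
  have := hiso ![a, b, a', b', c'', d''] ![c, d, c', d', a'', b'']
    (by intro i; fin_cases i <;> simp [*]) (by intro i; fin_cases i <;> simp [*])
  rw [← ZMod.intCast_zmod_eq_zero_iff_dvd] at this
  simp only [Fin.sum_univ_six] at this
  simp at this
  constructor
  · intro h
    have h2 := this.mp (by linear_combination (-1 : ZMod N) * h)
    linarith
  · intro h
    have h2 := this.mpr (by linarith)
    linear_combination (-1 : ZMod N) * h2

theorem cl_finish (N : ℕ) [NeZero N] (A₁ : Finset ℤ) (hA₁ : A₁.Nonempty) (ψ : ℤ → ℤ)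
    (hiso : ∀ x y : Fin 6 → ℤ, (∀ i, x i ∈ A₁) → (∀ i, y i ∈ A₁) →
        ((N : ℤ) ∣ ∑ i, ψ (x i) - ∑ i, ψ (y i) ↔ ∑ i, x i = ∑ i, y i))
    (m : ℕ) (hm : (N : ℝ) ^ 2 ≤ m * (A₁.card : ℝ) ^ 2) :
    ∃ A' ⊆ A₁, (A₁.card : ℝ) ≤ (8 * (2 * ((m : ℝ) + 1) + 1)) ^ (m + 1) * A'.card ∧
      ∃ φ : ℤ → ℤ, IsOrderPresFreiman2Iso A' φ ∧
        ∀ a ∈ A', (|φ a| : ℝ) ≤ (m + 1) * N := by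
  classical
  have hNpos : 0 < N := Nat.pos_of_ne_zero (NeZero.ne N)
  have hNR : (0 : ℝ) < N := by exact_mod_cast hNpos
  obtain ⟨a₁, ha₁⟩ := hA₁
  have hadd := cl_rep_add N A₁ ψ hiso
  have hrep0 : ClRep N A₁ ψ 0 0 :=
    ⟨a₁, ha₁, a₁, ha₁, a₁, ha₁, a₁, ha₁, by ring, by ring⟩
  have huniq : ∀ x z z', ClRep N A₁ ψ x z → ClRep N A₁ ψ x z' → z = z' := by
    intro x z z' h h'
    have := (hadd x 0 x z 0 z' h hrep0 h').mp (by simp)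
    linarith
  have hzero : ∀ x, ClRep N A₁ ψ x 0 → x = 0 := by
    intro x h
    have := (hadd 0 0 x 0 0 0 hrep0 hrep0 h).mpr (by simp)
    simpa using this
  -- the image in `ZMod N`
  have hinj : Set.InjOn (fun a : ℤ => (ψ a : ZMod N)) A₁ := by
    intro a ha b hb hab
    have h1 : ClRep N A₁ ψ 0 (a - b) :=
      ⟨a, ha, a₁, ha₁, b, hb, a₁, ha₁, by simp only at hab; rw [hab]; ring, by ring⟩
    have := huniq _ _ _ h1 hrep0
    linarith
  obtain ⟨Γ₀, hΓ₀c, hΓ₀⟩ := cl_bogolyubov N (A₁.image (fun a : ℤ => (ψ a : ZMod N)))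
    ⟨_, Finset.mem_image_of_mem _ ha₁⟩
  rw [Finset.card_image_of_injOn hinj] at hΓ₀c
  have hA₁c : (0 : ℝ) < A₁.card := by exact_mod_cast Finset.card_pos.mpr ⟨a₁, ha₁⟩
  have hΓ₀m : Γ₀.card ≤ m := by
    have : (Γ₀.card : ℝ) * (A₁.card : ℝ) ^ 2 ≤ m * (A₁.card : ℝ) ^ 2 := hΓ₀c.trans hm
    have := le_of_mul_le_mul_right this (by positivity)
    exact_mod_cast this
  set Γ := insert (1 : ZMod N) Γ₀ with hΓ
  have hcard : Fintype.card Γ ≤ m + 1 := by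
    rw [Fintype.card_coe]
    exact (Finset.card_insert_le _ _).trans (by omega)
  let one : Γ := ⟨1, Finset.mem_insert_self _ _⟩
  let L : Submodule ℤ (Γ → ℤ) :=
    { carrier := {y | ∃ x : ZMod N, ∀ r : Γ, ((y r : ℤ) : ZMod N) = r * x}
      add_mem' := by
        rintro y y' ⟨x, hx⟩ ⟨x', hx'⟩
        exact ⟨x + x', fun r => by simp [hx r, hx' r, mul_add]⟩
      zero_mem' := ⟨0, fun r => by simp⟩
      smul_mem' := by
        rintro n y ⟨x, hx⟩
        exact ⟨n * x, fun r => by simp [hx r]; ring⟩ }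
  have hLmem : ∀ y, y ∈ L ↔ ∀ r : Γ, ((y r : ℤ) : ZMod N) = r * (y one : ZMod N) := by
    intro y
    constructor
    · rintro ⟨x, hx⟩ r
      rw [hx r, hx one]; simp [one]
    · intro h; exact ⟨_, h⟩
  have hLrep : ∀ y ∈ L, ‖y‖ ≤ (N : ℝ) / 4 → ∃ z, ClRep N A₁ ψ (y one : ZMod N) z := by
    intro y hy hyn
    have := hΓ₀ (y one : ZMod N) (by
      intro r hr
      rw [← (hLmem y).mp hy ⟨r, Finset.mem_insert_of_mem hr⟩, ZMod.stdAddChar_coe]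
      have hb := (norm_le_pi_norm y ⟨r, Finset.mem_insert_of_mem hr⟩).trans hyn
      rw [Int.norm_eq_abs] at hb
      set t := y ⟨r, Finset.mem_insert_of_mem hr⟩
      have e : (2 * (Real.pi : ℂ) * Complex.I * (t : ℂ) / (N : ℂ))
          = ((2 * Real.pi * t / N : ℝ) : ℂ) * Complex.I := by push_cast; ring
      rw [e, Complex.exp_ofReal_mul_I_re]
      have hb' := abs_le.mp hb
      apply Real.cos_nonneg_of_neg_pi_div_two_le_of_le
      · rw [le_div_iff₀ hNR]; nlinarith [Real.pi_pos]
      · rw [div_le_iff₀ hNR]; nlinarith [Real.pi_pos])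
    obtain ⟨a, ha, b, hb, c, hc, d, hd, h⟩ := this
    obtain ⟨a₁, ha₁, rfl⟩ := Finset.mem_image.mp ha
    obtain ⟨b₁, hb₁, rfl⟩ := Finset.mem_image.mp hb
    obtain ⟨c₁, hc₁, rfl⟩ := Finset.mem_image.mp hc
    obtain ⟨d₁, hd₁, rfl⟩ := Finset.mem_image.mp hd
    exact ⟨a₁ + b₁ - c₁ - d₁, a₁, ha₁, b₁, hb₁, c₁, hc₁, d₁, hd₁, h, rfl⟩
  set f : (Γ → ℤ) → ℤ := fun y =>
    if h : ∃ z, ClRep N A₁ ψ (y one : ZMod N) z then h.choose else 0 with hf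
  have hfrep : ∀ y z, ClRep N A₁ ψ (y one : ZMod N) z → f y = z := by
    intro y z hz
    have hex : ∃ z, ClRep N A₁ ψ (y one : ZMod N) z := ⟨z, hz⟩
    simp only [hf, dif_pos hex]
    exact huniq _ _ _ hex.choose_spec hz
  -- parameters
  set q : ℕ := 8 * (2 * (m + 1) + 1) with hq
  have hqpos : 0 < q := by omega
  have hqR : (0 : ℝ) < q := by exact_mod_cast hqpos
  set R : ℝ := 2 * N / q with hR
  have hRT : (2 * (Fintype.card Γ : ℝ) + 1) * R ≤ (N : ℝ) / 4 := by
    have h1 : (Fintype.card Γ : ℝ) ≤ m + 1 := by exact_mod_cast hcard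
    have h2 : (2 * ((m : ℝ) + 1) + 1) * R = (N : ℝ) / 4 := by
      rw [hR, hq]; push_cast; field_simp; ring
    rw [← h2]
    have : 0 ≤ R := by positivity
    nlinarith
  have hRT' : R ≤ (N : ℝ) / 4 := by
    have : 0 ≤ R := by positivity
    have : (0 : ℝ) ≤ Fintype.card Γ := by positivity
    nlinarith
  set U : Finset (Γ → ℤ) :=
    Finset.univ.image (fun x : ZMod N => fun r : Γ => ((r : ZMod N) * x).valMinAbs) with hU
  have hUc : U.card ≤ N := by
    refine Finset.card_image_le.trans ?_
    rw [Finset.card_univ, ZMod.card]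
  have hfi : ∀ u ∈ L, ‖u‖ ≤ (N : ℝ) / 4 → f u = 0 → u = 0 := by
    intro u hu hun h0
    obtain ⟨z, hz⟩ := hLrep u hu hun
    rw [hfrep u z hz] at h0
    subst h0
    have h1 := hzero _ hz
    ext r
    have h2 := (hLmem u).mp hu r
    rw [h1, mul_zero, ZMod.intCast_zmod_eq_zero_iff_dvd] at h2
    refine Int.eq_zero_of_abs_lt_dvd h2 ?_
    have hb := (norm_le_pi_norm u r).trans hun
    rw [Int.norm_eq_abs] at hb
    have : |(u r : ℝ)| < N := by linarith
    exact_mod_cast this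
  obtain ⟨H, G, hBH, hGadd, hGneg, hG⟩ := cl_lattice L R ((N : ℝ) / 4) (by positivity) hRT f
    (by
      intro u hu v hv hun hvn huvn
      obtain ⟨z₁, hz₁⟩ := hLrep u hu hun
      obtain ⟨z₂, hz₂⟩ := hLrep v hv hvn
      obtain ⟨z₃, hz₃⟩ := hLrep (u + v) (L.add_mem hu hv) huvn
      rw [hfrep _ _ hz₁, hfrep _ _ hz₂, hfrep _ _ hz₃]
      exact (hadd _ _ _ _ _ _ hz₁ hz₂ hz₃).mp (by simp))
    hfi U
    (by
      intro u hu hun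
      rw [hU, Finset.mem_image]
      refine ⟨(u one : ZMod N), Finset.mem_univ _, ?_⟩
      ext r
      rw [← (hLmem u).mp hu r, ZMod.valMinAbs_spec]
      refine ⟨rfl, ?_⟩
      have hb := (norm_le_pi_norm u r).trans hun
      rw [Int.norm_eq_abs] at hb
      have hb' := abs_le.mp hb
      constructor
      · have : (-(N : ℝ)) < (u r : ℝ) * 2 := by linarith
        exact_mod_cast this
      · have : (u r : ℝ) * 2 ≤ N := by linarith
        exact_mod_cast this)
  -- pigeonhole into cells
  set v : ℤ → Γ → ℕ := fun a r => ((r : ZMod N) * (ψ a : ZMod N)).val with hv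
  have hvlt : ∀ a r, v a r < N := fun a r => ZMod.val_lt _
  have hvcast : ∀ a r, ((v a r : ℕ) : ZMod N) = (r : ZMod N) * (ψ a : ZMod N) :=
    fun a r => ZMod.natCast_zmod_val _
  have hmaps : ∀ a ∈ A₁, (fun r => v a r * q / N) ∈
      Fintype.piFinset (fun _ : Γ => Finset.range q) := by
    intro a _
    rw [Fintype.mem_piFinset]
    intro r
    rw [Finset.mem_range, Nat.div_lt_iff_lt_mul hNpos, mul_comm]
    exact Nat.mul_lt_mul_of_pos_left (hvlt a r) hqpos
  obtain ⟨j, hj, hjc⟩ := Finset.exists_le_card_fiber_of_nsmul_le_card_of_maps_to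
    (b := (A₁.card : ℝ) / (q : ℝ) ^ (Fintype.card Γ)) hmaps
    ⟨fun _ => 0, by rw [Fintype.mem_piFinset]; intro r; simpa using hqpos⟩
    (by
      rw [Fintype.card_piFinset]
      simp only [Finset.card_range, Finset.prod_const, Finset.card_univ, nsmul_eq_mul]
      push_cast
      rw [mul_div_cancel₀]
      positivity)
  set A' := A₁.filter (fun a => (fun r => v a r * q / N) = j) with hA'
  have hA'mem : ∀ a, a ∈ A' → a ∈ A₁ ∧ ∀ r, v a r * q / N = j r := by
    intro a ha
    rw [hA', Finset.mem_filter] at ha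
    exact ⟨ha.1, fun r => congrFun ha.2 r⟩
  have hA'c : (A₁.card : ℝ) ≤ (q : ℝ) ^ (m + 1) * A'.card := by
    rw [div_le_iff₀ (by positivity)] at hjc
    have h1 : (q : ℝ) ^ (Fintype.card Γ) ≤ (q : ℝ) ^ (m + 1) :=
      pow_le_pow_right₀ (by exact_mod_cast hqpos) hcard
    have h2 : (0 : ℝ) ≤ A'.card := by positivity
    nlinarith
  have hA'ne : A'.Nonempty := by
    rw [← Finset.card_pos]
    by_contra h
    have h0 : A'.card = 0 := by omega
    rw [h0] at hA'c
    simp at hA'c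
    have : (A₁.card : ℝ) = 0 := by rw [hA'c]; simp
    linarith
  obtain ⟨a₀, ha₀⟩ := hA'ne
  have hclose : ∀ a ∈ A', ∀ b ∈ A', ∀ r, |(v a r : ℝ) - v b r| ≤ N / q := by
    intro a ha b hb r
    have h1 := (hA'mem a ha).2 r
    have h2 := (hA'mem b hb).2 r
    have h3 := Nat.div_add_mod (v a r * q) N
    have h4 := Nat.div_add_mod (v b r * q) N
    have h5 := Nat.mod_lt (v a r * q) hNpos
    have h6 := Nat.mod_lt (v b r * q) hNpos
    rw [h1] at h3
    rw [h2] at h4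
    have h7 : v a r * q ≤ v b r * q + N := by omega
    have h8 : v b r * q ≤ v a r * q + N := by omega
    have h7' : (v a r : ℝ) * q ≤ v b r * q + N := by exact_mod_cast h7
    have h8' : (v b r : ℝ) * q ≤ v a r * q + N := by exact_mod_cast h8
    rw [abs_le, neg_le, le_div_iff₀ hqR, le_div_iff₀ hqR]
    constructor <;> linarith
  set Y : ℤ → Γ → ℤ := fun a r => (v a r : ℤ) - v a₀ r with hY
  have hYcast : ∀ a r, ((Y a r : ℤ) : ZMod N) = (r : ZMod N) * ((ψ a : ZMod N) - ψ a₀) := by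
    intro a r
    simp only [hY]; push_cast
    rw [hvcast, hvcast]; ring
  have hYL : ∀ a, Y a ∈ L := fun a => ⟨_, hYcast a⟩
  have hYR : ∀ a ∈ A', ‖Y a‖ ≤ R := by
    intro a ha
    rw [pi_norm_le_iff_of_nonneg (by positivity)]
    intro r
    rw [Int.norm_eq_abs]
    simp only [hY]; push_cast
    refine (hclose a ha a₀ ha₀ r).trans ?_
    rw [hR]; gcongr; linarith
  have hYH : ∀ a ∈ A', Y a ∈ H := fun a ha => hBH _ (hYL a) (hYR a ha)
  have hcomb : ∀ a ∈ A', ∀ b ∈ A', ∀ c ∈ A', ∀ d ∈ A',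
      Y a + Y b + -Y c + -Y d ∈ L ∧ ‖Y a + Y b + -Y c + -Y d‖ ≤ R ∧
      f (Y a + Y b + -Y c + -Y d) = a + b - c - d ∧
      G (Y a + Y b + -Y c + -Y d) = G (Y a) + G (Y b) - G (Y c) - G (Y d) := by
    intro a ha b hb c hc d hd
    refine ⟨?_, ?_, ?_, ?_⟩
    · exact L.add_mem (L.add_mem (L.add_mem (hYL a) (hYL b)) (L.neg_mem (hYL c)))
        (L.neg_mem (hYL d))
    · rw [pi_norm_le_iff_of_nonneg (by positivity)]
      intro r
      rw [Int.norm_eq_abs]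
      simp only [hY, Pi.add_apply, Pi.neg_apply]; push_cast
      have h1 := abs_le.mp (hclose a ha c hc r)
      have h2 := abs_le.mp (hclose b hb d hd r)
      have h3 : R = N / q + N / q := by rw [hR]; ring
      rw [h3, abs_le]
      constructor <;> linarith
    · apply hfrep
      refine ⟨a, (hA'mem a ha).1, b, (hA'mem b hb).1, c, (hA'mem c hc).1, d, (hA'mem d hd).1,
        ?_, rfl⟩
      simp only [Pi.add_apply, Pi.neg_apply]; push_cast
      rw [hYcast, hYcast, hYcast, hYcast]
      simp only [one]; ring
    · have hab := H.add_mem (hYH a ha) (hYH b hb)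
      have hc' := H.neg_mem (hYH c hc)
      have hd' := H.neg_mem (hYH d hd)
      rw [hGadd _ (H.add_mem hab hc') _ hd', hGadd _ hab _ hc', hGadd _ (hYH a ha) _ (hYH b hb),
        hGneg _ (hYH c hc), hGneg _ (hYH d hd)]
      ring
  have hG0 : G 0 = 0 := by
    have := hGadd 0 H.zero_mem 0 H.zero_mem
    simp at this; exact this
  refine ⟨A', Finset.filter_subset _ _, ?_, fun a => G (Y a), ?_, ?_⟩
  · have : (q : ℝ) = 8 * (2 * ((m : ℝ) + 1) + 1) := by rw [hq]; push_cast; ring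
    rw [← this]; exact hA'c
  · refine cl_key_order A' _ ?_ ?_
    · intro a ha b hb c hc d hd hlt
      obtain ⟨h1, h2, h3, h4⟩ := hcomb a ha b hb c hc d hd
      have := (hG _ h1 h2).1 (by rw [h3]; linarith)
      rw [h4] at this
      linarith
    · intro a ha b hb c hc d hd heq
      obtain ⟨h1, h2, h3, h4⟩ := hcomb a ha b hb c hc d hd
      have := hfi _ h1 (h2.trans hRT') (by rw [h3]; linarith)
      rw [this, hG0] at h4
      linarith
  · intro a ha
    have h1 := (hG _ (hYL a) (hYR a ha)).2
    have h2 : (|G (Y a)| : ℝ) ≤ Fintype.card Γ * U.card := by exact_mod_cast h1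
    refine h2.trans ?_
    have h3 : (Fintype.card Γ : ℝ) ≤ m + 1 := by exact_mod_cast hcard
    have h4 : (U.card : ℝ) ≤ N := by exact_mod_cast hUc
    exact mul_le_mul h3 h4 (Nat.cast_nonneg _) (add_nonneg (Nat.cast_nonneg m) zero_le_one)


theorem condensing_lemma :
    ∀ K : ℝ, 0 < K → ∃ c₁ c₂ : ℝ, 0 < c₁ ∧ 0 < c₂ ∧
      ∀ A : Finset ℤ, A.Nonempty → ((A + A).card : ℝ) ≤ K * A.card →
        ∃ A' ⊆ A, c₁ * (A.card : ℝ) ≤ (A'.card : ℝ) ∧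
          ∃ φ : ℤ → ℤ, IsOrderPresFreiman2Iso A' φ ∧
            ∀ a ∈ A', (|φ a| : ℝ) ≤ c₂ * (A'.card : ℝ) := by
  intro K hK
  set m : ℕ := ⌈(6 * K ^ 12) ^ 2⌉₊ with hm
  have hmle : (6 * K ^ 12) ^ 2 ≤ (m : ℝ) := Nat.le_ceil _
  set W : ℝ := (8 * (2 * ((m : ℝ) + 1) + 1)) ^ (m + 1) with hW
  have hWpos : 0 < W := by positivity
  refine ⟨1 / (6 * W), (m + 1) * (6 * K ^ 12) * W, by positivity, by positivity, ?_⟩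
  intro A hA hAA
  obtain ⟨A₁, hA₁, hA₁c, ψ, hψ⟩ := cl_ruzsa A hA
  have hApos : (0 : ℝ) < A.card := by exact_mod_cast hA.card_pos
  have hA₁ne : A₁.Nonempty := by
    rw [← Finset.card_pos]
    have : (0 : ℝ) < A₁.card := by linarith
    exact_mod_cast this
  set N := (6 • A - 6 • A).card with hN
  have hNK : (N : ℝ) ≤ K ^ 12 * A.card := by
    have h1 := Finset.pluennecke_ruzsa_inequality_nsmul_sub_nsmul_add hA A 6 6
    have h2 : (N : ℝ) ≤ (((A + A).card : ℝ) / A.card) ^ (6 + 6) * A.card := by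
      have h3 : (((N : ℚ≥0) : ℚ) : ℝ) ≤
        ((((((A + A).card : ℚ≥0) / (A.card : ℚ≥0)) ^ (6 + 6) * (A.card : ℚ≥0) : ℚ≥0) : ℚ) : ℝ) := by
        exact_mod_cast h1
      push_cast at h3
      exact h3
    refine h2.trans ?_
    have h4 : ((A + A).card : ℝ) / A.card ≤ K := by rw [div_le_iff₀ hApos]; exact hAA
    gcongr
  have hNpos : N ≠ 0 := by
    rw [hN, Finset.card_ne_zero]
    exact Finset.Nonempty.sub hA.nsmul hA.nsmul
  haveI : NeZero N := ⟨hNpos⟩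
  have hN1 : (N : ℝ) ≤ 6 * K ^ 12 * A₁.card := by
    have : 0 < K ^ 12 := by positivity
    nlinarith
  obtain ⟨A', hA', hA'c, φ, hφ, hφb⟩ := cl_finish N A₁ hA₁ne ψ hψ m (by
    calc (N : ℝ) ^ 2 ≤ (6 * K ^ 12 * A₁.card) ^ 2 := by gcongr
      _ = (6 * K ^ 12) ^ 2 * (A₁.card : ℝ) ^ 2 := by ring
      _ ≤ _ := by gcongr)
  rw [← hW] at hA'c
  refine ⟨A', hA'.trans hA₁, ?_, φ, hφ, ?_⟩
  · rw [div_mul_eq_mul_div, one_mul, div_le_iff₀ (by positivity)]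
    linarith
  · intro a ha
    refine (hφb a ha).trans ?_
    calc ((m : ℝ) + 1) * N ≤ (m + 1) * (6 * K ^ 12 * (W * A'.card)) := by
          gcongr
          refine hN1.trans ?_
          gcongr
      _ = _ := by ring
end

section
/- For every real K > 0 there exist constants c₁ > 0 and c₂ > 0, depending only on K, such that the following holds. If A ⊆ ℤ is a finite nonempty set with |A+A| ≤ K·|A|, then there exists a subset A' ⊆ A with |A'| ≥ c₂·|A| and EI(A') ≥ c₁·|A'|³. -/
open Pointwise

/-- Indexed energy of a finite set of integers: writing `A = {a₁ < a₂ < ⋯ < aₙ}`,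
the number of quadruples of indices `(i,j,k,l)` with `aᵢ + aⱼ = aₖ + aₗ` and
`i + j = k + l`. -/
def indexedEnergy (A : Finset ℤ) : ℕ :=
  (Finset.univ.filter
    (fun q : Fin A.card × Fin A.card × Fin A.card × Fin A.card =>
      ((A.orderIsoOfFin rfl q.1 : ℤ) + (A.orderIsoOfFin rfl q.2.1 : ℤ) =
        (A.orderIsoOfFin rfl q.2.2.1 : ℤ) + (A.orderIsoOfFin rfl q.2.2.2 : ℤ)) ∧
      ((q.1 : ℕ) + (q.2.1 : ℕ) = (q.2.2.1 : ℕ) + (q.2.2.2 : ℕ)))).card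


def Bl {ι Λ : Type} [AddCommGroup Λ] (S : Finset ι) (x : ι → Λ →+ ℝ) (r : ℝ) : Set Λ :=
  {v | ∀ i ∈ S, |x i v| ≤ r}

section
variable {ι Λ : Type} [AddCommGroup Λ] {S : Finset ι} {x : ι → Λ →+ ℝ}

lemma Bl_mono {r s : ℝ} (h : r ≤ s) : Bl S x r ⊆ Bl S x s :=
  fun _ hv i hi => (hv i hi).trans h

lemma Bl_zero {r : ℝ} (h : 0 ≤ r) : (0 : Λ) ∈ Bl S x r := fun i _ => by simpa using h

lemma Bl_neg {r : ℝ} {v : Λ} (h : v ∈ Bl S x r) : -v ∈ Bl S x r := fun i hi => by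
  simpa using h i hi

lemma Bl_add {r s q : ℝ} {u v : Λ} (hu : u ∈ Bl S x r) (hv : v ∈ Bl S x s) (h : r + s ≤ q) :
    u + v ∈ Bl S x q := fun i hi => by
  rw [map_add]
  exact (abs_add_le _ _).trans ((add_le_add (hu i hi) (hv i hi)).trans h)

lemma Bl_sub {r s q : ℝ} {u v : Λ} (hu : u ∈ Bl S x r) (hv : v ∈ Bl S x s) (h : r + s ≤ q) :
    u - v ∈ Bl S x q := by
  rw [sub_eq_add_neg]; exact Bl_add hu (Bl_neg hv) h
end

theorem geo (d : ℕ) : ∃ ρ C : ℝ, 0 < ρ ∧ ρ ≤ 1 / 4 ∧ 0 < C ∧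
    ∀ (ι : Type) [DecidableEq ι] (Λ : Type) [AddCommGroup Λ] (S : Finset ι) (x : ι → Λ →+ ℝ) (ψ : Λ → ℝ),
      S.card ≤ d → (Bl S x 1).Finite →
      (∀ u v, u ∈ Bl S x 1 → v ∈ Bl S x 1 → u + v ∈ Bl S x 1 → ψ (u + v) = ψ u + ψ v) →
      (∀ u, u ∈ Bl S x 1 → ψ u = 0 → u = 0) →
      ∃ h : Λ → ℝ,
        (∀ u v, u ∈ Bl S x ρ → v ∈ Bl S x ρ → u + v ∈ Bl S x ρ → h (u + v) = h u + h v) ∧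
        (∀ u, u ∈ Bl S x ρ → 0 < ψ u → 1 ≤ h u) ∧
        (∀ u, u ∈ Bl S x ρ → |h u| ≤ C * ((Bl S x 1).ncard : ℝ)) := by
  -- a nonzero coordinate exists
  have key : ∀ (ι : Type) [DecidableEq ι] (Λ : Type) [AddCommGroup Λ] (S : Finset ι) (x : ι → Λ →+ ℝ) (ψ : Λ → ℝ),
      (Bl S x 1).Finite →
      (∀ u v, u ∈ Bl S x 1 → v ∈ Bl S x 1 → u + v ∈ Bl S x 1 → ψ (u + v) = ψ u + ψ v) →
      ∀ e, 0 < ψ e → ∃ i ∈ S, x i e ≠ 0 := by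
    intro ι _ Λ _ S x ψ hfin hadd e he
    by_contra! hcon
    have hmem : ∀ n : ℕ, (n • e) ∈ Bl S x 1 := fun n i hi => by
      simp [map_nsmul, hcon i hi]
    have hψ0 : ψ 0 = 0 := by
      have := hadd 0 0 (Bl_zero zero_le_one) (Bl_zero zero_le_one) (by simpa using Bl_zero zero_le_one)
      simp at this; exact this
    have hn : ∀ n : ℕ, ψ (n • e) = n * ψ e := by
      intro n
      induction n with
      | zero => simp [hψ0]
      | succ n ih =>
        have h1 := hadd (n • e) e (hmem n) (by simpa using hmem 1) (by
          have := hmem (n+1); rwa [succ_nsmul] at this)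
        rw [succ_nsmul, h1, ih]; push_cast; ring
    have hinj : Function.Injective (fun n : ℕ => n • e) := by
      intro a b hab
      have : ψ (a • e) = ψ (b • e) := congrArg ψ hab
      rw [hn, hn] at this
      exact_mod_cast mul_right_cancel₀ he.ne' this
    exact Set.infinite_of_injective_forall_mem hinj hmem hfin
  induction d with
  | zero =>
    refine ⟨1/4, 1, by norm_num, le_rfl, one_pos, ?_⟩
    intro ι _ Λ _ S x ψ hS hfin hadd hinj
    refine ⟨fun _ => 0, by simp, ?_, by simp⟩
    intro u hu hpos
    obtain ⟨i, hi, _⟩ := key ι Λ S x ψ hfin hadd u hpos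
    simp at hS
    simp [hS] at hi
  | succ d ih =>
    obtain ⟨ρ', C', hρ', hρ'1, hC', IH⟩ := ih
    refine ⟨ρ' / 16, 4 * C' + 2, by positivity, by linarith, by positivity, ?_⟩
    intro ι _ Λ _ S x ψ hS hfin hadd hinj
    by_cases hz : ∃ e ∈ Bl S x (1/4), 0 < ψ e
    swap
    · push Not at hz
      refine ⟨fun _ => 0, by simp, ?_, by intros; simp; positivity⟩
      intro u hu hpos
      exact absurd hpos (not_lt.mpr (hz u (Bl_mono (by linarith) hu)))
    have hψ0 : ψ 0 = 0 := by
      have := hadd 0 0 (Bl_zero zero_le_one) (Bl_zero zero_le_one) (by simpa using Bl_zero zero_le_one)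
      simp at this; exact this
    have hψneg : ∀ u ∈ Bl S x 1, ψ (-u) = - ψ u := by
      intro u hu
      have := hadd u (-u) hu (Bl_neg hu) (by simpa using Bl_zero zero_le_one)
      simp [hψ0] at this
      linarith
    obtain ⟨e, ⟨heB, hepos⟩, hemin⟩ := Set.exists_min_image
      {e | e ∈ Bl S x (1/4) ∧ 0 < ψ e} ψ
      (hfin.subset (fun e he => Bl_mono (by norm_num) he.1)) hz
    obtain ⟨i1, hi1, hi1ne⟩ := key ι Λ S x ψ hfin hadd e hepos
    obtain ⟨i0, hi0, hmax⟩ := S.exists_max_image (fun i => |x i e|) ⟨i1, hi1⟩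
    set t := |x i0 e| with ht
    have htpos : 0 < t := lt_of_lt_of_le (abs_pos.mpr hi1ne) (hmax i1 hi1)
    have hx0 : x i0 e ≠ 0 := abs_pos.mp htpos
    have ht4 : t ≤ 1/4 := heB i0 hi0
    -- minimality
    have hM : ∀ u ∈ Bl S x (1/4), |ψ u| < ψ e → u = 0 := by
      intro u hu hlt
      have hu1 : u ∈ Bl S x 1 := Bl_mono (by norm_num) hu
      by_contra hne
      have hψu : ψ u ≠ 0 := fun h => hne (hinj u hu1 h)
      rcases lt_or_gt_of_ne hψu with h | h
      · have := hemin (-u) ⟨Bl_neg hu, by rw [hψneg u hu1]; linarith⟩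
        rw [hψneg u hu1] at this
        rw [abs_of_neg h] at hlt; linarith
      · have := hemin u ⟨hu, h⟩
        rw [abs_of_pos h] at hlt; linarith
    -- multiples
    have hmulmem : ∀ (j : ℤ) (r : ℝ), |(j:ℝ)| * t ≤ r → j • e ∈ Bl S x r := by
      intro j r hj i hi
      rw [map_zsmul, zsmul_eq_mul, abs_mul]
      exact (mul_le_mul_of_nonneg_left (hmax i hi) (abs_nonneg _)).trans hj
    have hmulN : ∀ n : ℕ, (n:ℝ) * t ≤ 1 → ψ ((n:ℤ) • e) = n * ψ e := by
      intro n
      induction n with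
      | zero => simp [hψ0]
      | succ n ihn =>
        intro h
        push_cast at h
        have hn : (n:ℝ) * t ≤ 1 := by nlinarith
        have h1 := hadd ((n:ℤ) • e) e (hmulmem n 1 (by simpa using hn)) (Bl_mono (by norm_num) heB)
          (by
            have := hmulmem (n+1) 1 (by
              rw [abs_of_nonneg (by positivity)]; push_cast; exact h)
            rwa [add_zsmul, one_zsmul] at this)
        push_cast
        rw [add_zsmul, one_zsmul, h1, ihn hn]; ring
    have hmul : ∀ j : ℤ, |(j:ℝ)| * t ≤ 1 → ψ (j • e) = j * ψ e := by
      intro j hj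
      obtain ⟨n, rfl | rfl⟩ := j.eq_nat_or_neg
      · exact hmulN n (by simpa using hj)
      · have hn : (n:ℝ) * t ≤ 1 := by simpa using hj
        rw [neg_zsmul, hψneg _ (hmulmem n 1 (by simpa using hn)), hmulN n hn]; push_cast; ring
    let τ : Λ →+ ℝ := (AddMonoidHom.mulLeft (x i0 e)⁻¹).comp (x i0)
    have hτ : ∀ v, τ v = (x i0 e)⁻¹ * x i0 v := fun v => rfl
    have hτe : τ e = 1 := by rw [hτ]; field_simp
    have hτt : ∀ v, |τ v| * t = |x i0 v| := by
      intro v; rw [hτ, abs_mul, abs_inv, ← ht]; field_simp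
    let E := AddSubgroup.zmultiples e
    let y : ι → Λ →+ ℝ := fun i =>
      (AddMonoidHom.mulLeft 8).comp (x i - (AddMonoidHom.mulLeft (x i e)).comp τ)
    have hy : ∀ i v, y i v = 8 * (x i v - x i e * τ v) := fun i v => rfl
    have hyE : ∀ i, E ≤ (y i).ker := by
      intro i
      rw [AddSubgroup.zmultiples_le]
      rw [AddMonoidHom.mem_ker, hy, hτe]; ring
    let x' : ι → (Λ ⧸ E) →+ ℝ := fun i => QuotientAddGroup.lift E (y i) (hyE i)
    have hx' : ∀ i (v : Λ), x' i (v : Λ ⧸ E) = 8 * (x i v - x i e * τ v) := fun i v => rfl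
    have hs : ∀ w : Λ ⧸ E, ∃ v : Λ, (v : Λ ⧸ E) = w ∧ |τ v| ≤ 1/2 := by
      intro w
      obtain ⟨v, rfl⟩ := QuotientAddGroup.mk_surjective w
      refine ⟨v - round (τ v) • e, ?_, ?_⟩
      · rw [QuotientAddGroup.eq]
        simp only [neg_sub, sub_add_cancel]
        exact AddSubgroup.mem_zmultiples_iff.mpr ⟨round (τ v), by abel⟩
      · rw [map_sub, map_zsmul, hτe]; simpa using abs_sub_round (τ v)
    choose s hs1 hs2 using hs
    let S' := S.erase i0
    have hsB : ∀ w ∈ Bl S' x' 1, s w ∈ Bl S x (1/4) := by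
      intro w hw i hi
      by_cases h : i = i0
      · subst h
        rw [← hτt]; nlinarith [hs2 w]
      · have h1 := hw i (Finset.mem_erase.mpr ⟨h, hi⟩)
        rw [← hs1 w, hx'] at h1
        have h2 : |x i e * τ (s w)| ≤ t * (1/2) := by
          rw [abs_mul]
          exact mul_le_mul (hmax i hi) (hs2 w) (abs_nonneg _) htpos.le
        rw [abs_le] at h1 h2 ⊢
        constructor <;> linarith
    let ψ' : Λ ⧸ E → ℝ := fun w => ψ (s w) - τ (s w) * ψ e
    have hcl : ∀ v ∈ Bl S x (1/2), (v : Λ ⧸ E) ∈ Bl S' x' 1 → 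
        ψ' (v : Λ ⧸ E) = ψ v - τ v * ψ e := by
      intro v hv hw
      have h1 := hs1 (v : Λ ⧸ E)
      rw [QuotientAddGroup.eq, AddSubgroup.mem_zmultiples_iff] at h1
      obtain ⟨j, hj⟩ := h1
      have hv' : v = s v + j • e := by rw [hj]; abel
      have hτv : τ v = τ (s v) + j := by
        conv_lhs => rw [hv']
        rw [map_add, map_zsmul, hτe]; simp
      have hjt : |(j:ℝ)| * t ≤ 1 := by
        have h3 : |(j:ℝ)| ≤ |τ v| + |τ (s v)| := by
          have : (j:ℝ) = τ v - τ (s v) := by rw [hτv]; ring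
          rw [this]; exact abs_sub _ _
        have h4 := hτt v
        have h5 := hv i0 hi0
        have h6 := hs2 (v : Λ ⧸ E)
        nlinarith
      have h7 := hadd (s v) (j • e) (Bl_mono (by norm_num) (hsB _ hw)) (hmulmem j 1 hjt)
        (by rw [← hv']; exact Bl_mono (by norm_num) hv)
      rw [← hv', hmul j hjt] at h7
      simp only [ψ']
      rw [h7, hτv]; ring
    have hS' : S'.card ≤ d := by
      rw [Finset.card_erase_of_mem hi0]; omega
    have hsinj : Function.Injective s := fun a b h => by rw [← hs1 a, ← hs1 b, h]
    have hfin' : (Bl S' x' 1).Finite := by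
      refine Set.Finite.of_finite_image (f := s) (hfin.subset ?_) hsinj.injOn
      rintro _ ⟨w, hw, rfl⟩
      exact Bl_mono (by norm_num) (hsB w hw)
    have hadd' : ∀ u v, u ∈ Bl S' x' 1 → v ∈ Bl S' x' 1 → u + v ∈ Bl S' x' 1 →
        ψ' (u + v) = ψ' u + ψ' v := by
      intro u v hu hv huv
      have h1 : ((s u + s v : Λ) : Λ ⧸ E) = u + v := by
        rw [QuotientAddGroup.mk_add, hs1, hs1]
      have h2 : s u + s v ∈ Bl S x (1/2) := Bl_add (hsB u hu) (hsB v hv) (by norm_num)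
      have h3 := hcl (s u + s v) h2 (by rw [h1]; exact huv)
      rw [h1] at h3
      rw [h3, hadd _ _ (Bl_mono (by norm_num) (hsB u hu)) (Bl_mono (by norm_num) (hsB v hv))
        (Bl_mono (by norm_num) h2), map_add]
      simp only [ψ']; ring
    have hinj' : ∀ u, u ∈ Bl S' x' 1 → ψ' u = 0 → u = 0 := by
      intro u hu h0
      simp only [ψ'] at h0
      have : s u = 0 := by
        apply hM _ (hsB u hu)
        have : ψ (s u) = τ (s u) * ψ e := by linarith
        rw [this, abs_mul, abs_of_pos hepos]
        nlinarith [hs2 u]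
      rw [← hs1 u, this]; rfl
    obtain ⟨h', hh1, hh2, hh3⟩ := IH ι (Λ ⧸ E) S' x' ψ' hS' hfin' hadd' hinj'
    -- cardinality
    have hcard : ((Bl S' x' 1).ncard : ℝ) ≤ 2 * t * ((Bl S x 1).ncard : ℝ) := by
      let J := ⌊1 / (2 * t)⌋₊
      have hJ : (J : ℝ) ≤ 1 / (2 * t) := Nat.floor_le (by positivity)
      have hJ' : 1 / (2 * t) ≤ (J : ℝ) + 1 := (Nat.lt_floor_add_one _).le
      let F : (Λ ⧸ E) × ℕ → Λ := fun p => s p.1 + (p.2 : ℤ) • e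
      have hFinj : Function.Injective F := by
        rintro ⟨a, m⟩ ⟨b, n⟩ hab
        simp only [F] at hab
        have h1 : a = b := by
          rw [← hs1 a, ← hs1 b, QuotientAddGroup.eq]
          refine AddSubgroup.mem_zmultiples_iff.mpr ⟨m - n, ?_⟩
          rw [sub_zsmul]
          have : s b = s a + (m:ℤ) • e - (n:ℤ) • e := by rw [hab]; abel
          rw [this]; abel
        subst h1
        have h2 := congrArg τ (add_left_cancel hab)
        rw [map_zsmul, map_zsmul, hτe] at h2
        simp at h2
        rw [h2]
      have hsub : F '' ((Bl S' x' 1) ×ˢ (Finset.range (J+1) : Set ℕ)) ⊆ Bl S x 1 := by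
        rintro _ ⟨⟨w, n⟩, ⟨hw, hn⟩, rfl⟩
        simp only [F]
        refine Bl_add (hsB w hw) (hmulmem n (1/2) ?_) (by norm_num)
        have : n ≤ J := by simpa [Nat.lt_succ_iff] using hn
        have : (n:ℝ) ≤ 1 / (2*t) := le_trans (by exact_mod_cast this) hJ
        have h8 := mul_le_mul_of_nonneg_right this htpos.le
        have : 1 / (2*t) * t = 1/2 := by field_simp
        rw [this] at h8
        simpa using h8
      have h1 := Set.ncard_le_ncard hsub hfin
      rw [Set.ncard_image_of_injective _ hFinj, Set.ncard_prod, Set.ncard_coe_finset,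
        Finset.card_range] at h1
      have h2 : ((Bl S' x' 1).ncard : ℝ) * (J + 1) ≤ ((Bl S x 1).ncard : ℝ) := by exact_mod_cast h1
      have h3 : ((Bl S' x' 1).ncard : ℝ) * (1 / (2*t)) ≤ ((Bl S x 1).ncard : ℝ) :=
        (mul_le_mul_of_nonneg_left hJ' (by positivity)).trans h2
      rw [mul_one_div, div_le_iff₀ (by positivity)] at h3
      linarith
    have hpos' : (1:ℝ) ≤ ((Bl S' x' 1).ncard : ℝ) := by
      have : 0 < (Bl S' x' 1).ncard := (Set.ncard_pos hfin').mpr ⟨0, Bl_zero zero_le_one⟩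
      exact_mod_cast this
    have hproj : ∀ u ∈ Bl S x (ρ'/16), (u : Λ ⧸ E) ∈ Bl S' x' ρ' := by
      intro u hu i hi
      have hiS := Finset.mem_of_mem_erase hi
      rw [hx']
      have h1 := hu i hiS
      have h2 : |x i e * τ u| ≤ ρ'/16 := by
        rw [abs_mul]
        calc _ ≤ t * |τ u| := mul_le_mul_of_nonneg_right (hmax i hiS) (abs_nonneg _)
          _ = |x i0 u| := by rw [mul_comm]; exact hτt u
          _ ≤ _ := hu i0 hi0
      rw [abs_le] at h1 h2 ⊢
      constructor <;> linarith
    refine ⟨fun u => (1/t) * h' (u : Λ ⧸ E) + τ u, ?_, ?_, ?_⟩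
    · intro u v hu hv huv
      have := hh1 u v (hproj u hu) (hproj v hv) (by
        rw [← QuotientAddGroup.mk_add]; exact hproj _ huv)
      simp only [QuotientAddGroup.mk_add, map_add]
      rw [this]; ring
    · intro u hu hpos
      have hτu : |τ u| * t ≤ ρ'/16 := by rw [hτt]; exact hu i0 hi0
      have hu1 : u ∈ Bl S x 1 := Bl_mono (by linarith) hu
      by_cases huE : ∃ j : ℤ, |(j:ℝ)| * t ≤ 1 ∧ u = j • e
      · obtain ⟨j, hjt, rfl⟩ := huE
        rw [hmul j hjt] at hpos
        have hj : (0:ℝ) < j := by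
          by_contra hcon
          push Not at hcon
          nlinarith
        have hj1 : (1:ℝ) ≤ j := by
          have : 0 < j := by exact_mod_cast hj
          exact_mod_cast this
        have h0 : ((j • e : Λ) : Λ ⧸ E) = 0 := by
          rw [QuotientAddGroup.eq_zero_iff]
          exact AddSubgroup.mem_zmultiples_iff.mpr ⟨j, rfl⟩
        have h00 : h' 0 = 0 := by
          have := hh1 0 0 (Bl_zero hρ'.le) (Bl_zero hρ'.le) (by simpa using Bl_zero hρ'.le)
          simp at this; exact this
        simp only [h0, h00, map_zsmul, hτe]
        simpa using hj1
      · -- separation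
        have hsep : ψ e * (1/8) ≤ ψ u * t := by
          by_contra hcon
          push Not at hcon
          apply huE
          set j := ⌊ψ u / ψ e⌋ with hj
          have hj0 : 0 ≤ j := Int.floor_nonneg.mpr (by positivity)
          have hj1 : (j:ℝ) ≤ ψ u / ψ e := Int.floor_le _
          have hj2 : ψ u / ψ e < j + 1 := Int.lt_floor_add_one _
          rw [le_div_iff₀ hepos] at hj1
          rw [div_lt_iff₀ hepos] at hj2
          have hjt : |(j:ℝ)| * t ≤ 1/8 := by
            rw [abs_of_nonneg (by exact_mod_cast hj0)]
            by_contra hc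
            push Not at hc
            nlinarith
          refine ⟨j, by linarith, ?_⟩
          have hmem : u - j • e ∈ Bl S x (1/4) := 
            Bl_sub hu (hmulmem j _ hjt) (by linarith)
          have h9 := hadd (u - j • e) (j • e) (Bl_mono (by norm_num) hmem)
            (hmulmem j _ (by linarith)) (by simpa using hu1)
          rw [sub_add_cancel, hmul j (by linarith)] at h9
          refine sub_eq_zero.mp (hM _ hmem ?_)
          rw [abs_lt]
          constructor <;> nlinarith
        have hψ'pos : 0 < ψ' (u : Λ ⧸ E) := by
          rw [hcl u (Bl_mono (by linarith) hu) (Bl_mono (by linarith) (hproj u hu))]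
          have h10 : τ u * t ≤ 1/16 := by
            have := le_abs_self (τ u)
            nlinarith
          by_contra hcon
          push Not at hcon
          have h11 : ψ u * t ≤ τ u * ψ e * t := mul_le_mul_of_nonneg_right (by linarith) htpos.le
          nlinarith
        have h12 := hh2 u (hproj u hu) hψ'pos
        have h13 : -(1/16) ≤ τ u * t := by
          have := neg_abs_le (τ u)
          nlinarith
        have h14 : 1 ≤ t * ((1/t) * h' (u : Λ ⧸ E)) + τ u * t + 1/16 := by
          have : t * ((1/t) * h' (u : Λ ⧸ E)) = h' (u : Λ ⧸ E) := by field_simp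
          rw [this]; linarith
        by_contra hcon
        push Not at hcon
        nlinarith
    · intro u hu
      have h1 := hh3 u (hproj u hu)
      have hτu : |τ u| * t ≤ 1 := by
        rw [hτt]; exact (hu i0 hi0).trans (by linarith)
      set N := ((Bl S x 1).ncard : ℝ)
      set N' := ((Bl S' x' 1).ncard : ℝ)
      have h2 : |τ u| ≤ 2 * N := by
        have : |τ u| * t ≤ (2 * N) * t := by nlinarith
        exact le_of_mul_le_mul_right this htpos
      have h3 : |(1/t) * h' (u : Λ ⧸ E)| ≤ 2 * C' * N := by
        rw [abs_mul, abs_of_pos (by positivity : 0 < 1/t), one_div, inv_mul_le_iff₀ htpos]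
        calc _ ≤ C' * N' := h1
          _ ≤ C' * (2 * t * N) := mul_le_mul_of_nonneg_left hcard hC'.le
          _ = _ := by ring
      have hN : 0 ≤ N := by positivity
      calc _ ≤ |(1/t) * h' (u : Λ ⧸ E)| + |τ u| := abs_add_le _ _
        _ ≤ _ := by nlinarith [mul_nonneg hC'.le hN]

theorem bog {G : Type} [AddCommGroup G] [Fintype G] [DecidableEq G] (T : Finset G)
    (hT : T.Nonempty) : ∃ Γ : Finset (AddChar G ℂ),
      (Γ.card : ℝ) * (T.card : ℝ) ^ 2 ≤ 2 * (Fintype.card G : ℝ) ^ 2 ∧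
      ∀ x, (∀ χ ∈ Γ, 0 ≤ (χ x).re) →
        ∃ a ∈ T, ∃ b ∈ T, ∃ c ∈ T, ∃ d ∈ T, x = a + b - c - d := by
  classical
  let F : AddChar G ℂ → ℂ := fun χ => ∑ t ∈ T, χ t
  let N : AddChar G ℂ → ℝ := fun χ => Complex.normSq (F χ)
  have hN0 : ∀ χ, 0 ≤ N χ := fun χ => Complex.normSq_nonneg _
  have hN : ∀ χ, (N χ : ℂ) = ∑ a ∈ T, ∑ b ∈ T, χ (b - a) := by
    intro χ
    simp only [N, F]
    rw [Complex.normSq_eq_conj_mul_self, map_sum, Finset.sum_mul_sum]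
    refine Finset.sum_congr rfl fun a _ => Finset.sum_congr rfl fun b _ => ?_
    rw [sub_eq_add_neg, AddChar.map_add_eq_mul, AddChar.map_neg_eq_conj]
    ring
  have hTpos : (0:ℝ) < T.card := by exact_mod_cast hT.card_pos
  have hGpos : (0:ℝ) < Fintype.card G := by exact_mod_cast Fintype.card_pos
  have hsum2 : ∑ χ, N χ = Fintype.card G * T.card := by
    have : ((∑ χ, N χ : ℝ) : ℂ) = ((Fintype.card G * T.card : ℝ) : ℂ) := by
      push_cast
      simp_rw [hN]
      rw [Finset.sum_comm]
      have : ∀ a ∈ T, ∑ χ : AddChar G ℂ, ∑ b ∈ T, χ (b - a) = (Fintype.card G : ℂ) := by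
        intro a ha
        rw [Finset.sum_comm]
        simp_rw [AddChar.sum_apply_eq_ite, sub_eq_zero]
        simp [ha]
      rw [Finset.sum_congr rfl this]
      simp [mul_comm]
    exact_mod_cast this
  set θ : ℝ := (T.card : ℝ) ^ 3 / (2 * Fintype.card G) with hθ
  have hθpos : 0 < θ := by positivity
  let Γ := Finset.univ.filter (fun χ : AddChar G ℂ => θ ≤ N χ)
  refine ⟨Γ, ?_, ?_⟩
  · have h1 : (Γ.card : ℝ) * θ ≤ Fintype.card G * T.card := by
      rw [← hsum2]
      calc (Γ.card : ℝ) * θ = ∑ χ ∈ Γ, θ := by simp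
        _ ≤ ∑ χ ∈ Γ, N χ := Finset.sum_le_sum fun χ hχ => (Finset.mem_filter.mp hχ).2
        _ ≤ _ := Finset.sum_le_sum_of_subset_of_nonneg (Finset.subset_univ _) fun χ _ _ => hN0 χ
    rw [hθ, mul_div_assoc', div_le_iff₀ (by positivity)] at h1
    have : (Γ.card : ℝ) * (T.card : ℝ) ^ 2 * T.card ≤ 2 * (Fintype.card G : ℝ) ^ 2 * T.card := by
      nlinarith
    exact le_of_mul_le_mul_right this hTpos
  · intro x hx
    by_contra! hcon
    have hzero : ∑ χ : AddChar G ℂ, (N χ : ℂ) * (N χ : ℂ) * χ x = 0 := by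
      have h1 : ∀ χ : AddChar G ℂ, (N χ : ℂ) * (N χ : ℂ) * χ x
          = ∑ a ∈ T, ∑ c ∈ T, ∑ b ∈ T, ∑ d ∈ T, χ (c - a + (d - b) + x) := by
        intro χ
        rw [hN, Finset.sum_mul_sum, Finset.sum_mul]
        refine Finset.sum_congr rfl fun a _ => ?_
        simp_rw [Finset.sum_mul_sum]
        rw [Finset.sum_comm, Finset.sum_mul]
        refine Finset.sum_congr rfl fun c _ => ?_
        rw [Finset.sum_mul]
        refine Finset.sum_congr rfl fun b _ => ?_
        rw [Finset.sum_mul]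
        refine Finset.sum_congr rfl fun d _ => ?_
        rw [AddChar.map_add_eq_mul, AddChar.map_add_eq_mul]
      simp_rw [h1]
      rw [Finset.sum_comm]
      refine Finset.sum_eq_zero fun a ha => ?_
      rw [Finset.sum_comm]
      refine Finset.sum_eq_zero fun c hc => ?_
      rw [Finset.sum_comm]
      refine Finset.sum_eq_zero fun b hb => ?_
      rw [Finset.sum_comm]
      refine Finset.sum_eq_zero fun d hd => ?_
      rw [AddChar.sum_apply_eq_ite, if_neg]
      intro h
      apply hcon a ha b hb c hc d hd
      rw [eq_comm, ← sub_eq_zero, ← neg_eq_zero, ← h]; abel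
    have hre : ∑ χ : AddChar G ℂ, N χ * N χ * (χ x).re = 0 := by
      have := congrArg Complex.re hzero
      rw [Complex.re_sum] at this
      simpa [← Complex.ofReal_mul, Complex.re_ofReal_mul] using this
    have hlow : ∀ χ : AddChar G ℂ, (if χ = 0 then (T.card:ℝ)^4 else 0) - θ * N χ + (if χ = 0 then θ * (T.card:ℝ)^2 else 0)
        ≤ N χ * N χ * (χ x).re := by
      intro χ
      by_cases h0 : χ = 0
      · subst h0
        have : N 0 = (T.card:ℝ)^2 := by simp [N, F, sq]
        simp [this]
        ring_nf; rfl
      · simp only [h0, if_false, zero_sub, add_zero]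
        by_cases hχ : θ ≤ N χ
        · have h1 := hx χ (Finset.mem_filter.mpr ⟨Finset.mem_univ _, hχ⟩)
          have h2 := mul_nonneg hθpos.le (hN0 χ)
          have h3 := mul_nonneg (mul_nonneg (hN0 χ) (hN0 χ)) h1
          linarith
        · push Not at hχ
          have h1 : -1 ≤ (χ x).re := by
            have h2 := Complex.abs_re_le_norm (χ x)
            rw [AddChar.norm_apply] at h2
            exact (abs_le.mp h2).1
          have h4 : N χ * N χ ≤ θ * N χ := mul_le_mul_of_nonneg_right hχ.le (hN0 χ)
          have h5 := mul_nonneg (hN0 χ) (hN0 χ)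
          nlinarith
    have := Finset.sum_le_sum (s := Finset.univ) fun χ _ => hlow χ
    rw [hre, Finset.sum_add_distrib, Finset.sum_sub_distrib, ← Finset.mul_sum, hsum2] at this
    simp only [Finset.sum_ite_eq', Finset.mem_univ, if_true] at this
    have h6 : θ * (Fintype.card G * T.card) = (T.card:ℝ)^4 / 2 := by
      rw [hθ]; field_simp
    rw [h6] at this
    have h7 : 0 < (T.card:ℝ)^4 := by positivity
    have h8 : 0 ≤ θ * (T.card:ℝ)^2 := by positivity
    linarith

theorem model (A : Finset ℤ) (s m : ℕ) (hs : 1 ≤ s)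
    (hm : 2 * (s • A - s • A).card < m) :
    ∃ A1 ⊆ A, (A.card : ℝ) ≤ s * (A1.card : ℝ) ∧ ∃ φ : ℤ → ZMod m,
      ∀ z ∈ s • (A1.image fun a => (a, φ a)) - s • (A1.image fun a => (a, φ a)),
        z.1 = 0 ↔ z.2 = 0 := by
  classical
  set X := s • A - s • A with hX
  obtain ⟨p, hpge, hp⟩ := Nat.exists_infinite_primes (∑ d ∈ X, d.natAbs + 2)
  have : Fact p.Prime := ⟨hp⟩
  have hmpos : 0 < m := by omega
  have hXp : ∀ d ∈ X, d ≠ 0 → (d : ZMod p) ≠ 0 := by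
    intro d hd hd0 h
    rw [ZMod.intCast_zmod_eq_zero_iff_dvd] at h
    have h1 : d.natAbs ≤ ∑ d ∈ X, d.natAbs :=
      Finset.single_le_sum (f := fun d : ℤ => d.natAbs) (fun _ _ => Nat.zero_le _) hd
    have h2 := Int.natAbs_dvd_natAbs.mpr h
    have h3 := Nat.le_of_dvd (Int.natAbs_pos.mpr hd0) h2
    simp at h3
    omega
  set L : ℤ := (((p - 1) / m : ℕ) : ℤ) with hL
  let Ks := (Finset.Icc (-L) L).erase 0
  have hKs : Ks.card = 2 * ((p-1)/m) := by
    rw [Finset.card_erase_of_mem (by simp [hL]; positivity)]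
    simp; omega
  let Bad : Finset (ZMod p) := (X ×ˢ Ks).image fun e => ((m * e.2 : ℤ) : ZMod p) / (e.1 : ZMod p)
  have hBad : Bad.card < p - 1 := by
    refine lt_of_le_of_lt Finset.card_image_le ?_
    rw [Finset.card_product, hKs]
    have h1 : m * ((p-1)/m) ≤ p - 1 := Nat.mul_div_le _ _
    rcases Nat.eq_zero_or_pos ((p-1)/m) with h | h
    · rw [h]; omega
    · nlinarith
  obtain ⟨q, hq0, hq⟩ : ∃ q : ZMod p, q ≠ 0 ∧ q ∉ Bad := by
    by_contra! hcon
    have : (Finset.univ.erase (0 : ZMod p)) ⊆ Bad := fun q hq => hcon q (Finset.ne_of_mem_erase hq)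
    have h1 := Finset.card_le_card this
    rw [Finset.card_erase_of_mem (Finset.mem_univ _), Finset.card_univ, ZMod.card] at h1
    omega
  let φ0 : ℤ → ℕ := fun a => (q * (a : ZMod p)).val
  have hφ0 : ∀ a, φ0 a < p := fun a => ZMod.val_lt _
  have hφq : ∀ a, ((φ0 a : ℕ) : ZMod p) = q * (a : ZMod p) := fun a => ZMod.natCast_zmod_val _
  have hppos : 0 < p := hp.pos
  obtain ⟨k, hk, hcard⟩ := Finset.exists_le_card_fiber_of_nsmul_le_card_of_maps_to
    (s := A) (t := Finset.range s) (f := fun a => s * φ0 a / p) (b := (A.card : ℝ) / s)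
    (by
      intro a _
      rw [Finset.mem_range, Nat.div_lt_iff_lt_mul hppos]
      exact Nat.mul_lt_mul_of_pos_left (hφ0 a) (by omega))
    ⟨0, by simp; omega⟩ (by
      have : (s:ℝ) ≠ 0 := by positivity
      simp; field_simp; rfl)
  set A1 := A.filter (fun a => s * φ0 a / p = k) with hA1
  have hspos : (0:ℝ) < s := by exact_mod_cast hs
  refine ⟨A1, Finset.filter_subset _ _, ?_, fun a => ((φ0 a : ℕ) : ZMod m), ?_⟩
  · rw [div_le_iff₀ hspos] at hcard
    linarith
  set Gr := A1.image fun a => (a, ((φ0 a : ℕ) : ZMod m)) with hGr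
  have hrep : ∀ n : ℕ, ∀ z ∈ n • Gr, ∃ D : ℤ, (D : ZMod m) = z.2 ∧ (D : ZMod p) = q * (z.1 : ZMod p) ∧
      (n:ℤ) * k * p ≤ s * D ∧ (s:ℤ) * D ≤ n * ((k + 1) * p - 1) ∧ z.1 ∈ n • A := by
    intro n
    induction n with
    | zero =>
      intro z hz
      simp at hz
      subst hz
      exact ⟨0, by simp⟩
    | succ n ih =>
      intro z hz
      rw [succ_nsmul] at hz
      obtain ⟨z1, hz1, z2, hz2, rfl⟩ := Finset.mem_add.mp hz
      obtain ⟨D, h1, h2, h3, h4, h5⟩ := ih z1 hz1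
      rw [hGr, Finset.mem_image] at hz2
      obtain ⟨a, ha, rfl⟩ := hz2
      rw [hA1, Finset.mem_filter] at ha
      obtain ⟨haA, hak⟩ := ha
      have h6 : k * p ≤ s * φ0 a := by rw [← hak]; exact Nat.div_mul_le_self _ _
      have h7 : s * φ0 a < (k+1) * p := by
        rw [← hak]; exact Nat.lt_mul_of_div_lt (Nat.lt_succ_self _) hppos
      have h6' : (k:ℤ) * p ≤ s * φ0 a := by exact_mod_cast h6
      have h7' : (s:ℤ) * φ0 a + 1 ≤ (k+1) * p := by exact_mod_cast h7
      refine ⟨D + φ0 a, ?_, ?_, ?_, ?_, ?_⟩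
      · simp [h1]
      · push_cast; rw [h2, hφq]; simp; ring
      · push_cast; nlinarith
      · push_cast; nlinarith
      · rw [succ_nsmul]; exact Finset.add_mem_add h5 haA
  intro z hz
  obtain ⟨z1, hz1, z2, hz2, rfl⟩ := Finset.mem_sub.mp hz
  obtain ⟨D1, a1, b1, c1, d1, e1⟩ := hrep s z1 hz1
  obtain ⟨D2, a2, b2, c2, d2, e2⟩ := hrep s z2 hz2
  have hzX : (z1 - z2).1 ∈ X := Finset.sub_mem_sub e1 e2
  have hDm : ((D1 - D2 : ℤ) : ZMod m) = (z1 - z2).2 := by push_cast; rw [a1, a2]; rfl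
  have hDp : ((D1 - D2 : ℤ) : ZMod p) = q * (((z1 - z2).1 : ℤ) : ZMod p) := by
    push_cast; rw [b1, b2, Prod.fst_sub]; push_cast; ring
  have hsz : (0:ℤ) < s := by exact_mod_cast hs
  have hub : D1 - D2 ≤ p - 1 := by
    have : (s:ℤ) * (D1 - D2) ≤ s * (p - 1) := by nlinarith
    exact le_of_mul_le_mul_left this hsz
  have hlb : -(p - 1 : ℤ) ≤ D1 - D2 := by
    have : (s:ℤ) * (-(p-1)) ≤ s * (D1 - D2) := by nlinarith
    exact le_of_mul_le_mul_left this hsz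
  generalize D1 - D2 = D at *
  generalize z1 - z2 = z at *
  constructor
  · intro h0
    rw [h0] at hDp
    simp at hDp
    rw [ZMod.intCast_zmod_eq_zero_iff_dvd] at hDp
    have : D = 0 := Int.eq_zero_of_abs_lt_dvd hDp (by rw [abs_lt]; constructor <;> omega)
    rw [← hDm, this]; simp
  · intro h0
    by_contra hne
    have hzp := hXp _ hzX hne
    have hDp0 : (D : ZMod p) ≠ 0 := by rw [hDp]; exact mul_ne_zero hq0 hzp
    have hD0 : D ≠ 0 := by rintro rfl; simp at hDp0
    rw [h0, ZMod.intCast_zmod_eq_zero_iff_dvd] at hDm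
    obtain ⟨e, rfl⟩ := hDm
    apply hq
    refine Finset.mem_image.mpr ⟨(z.1, e), ?_, ?_⟩
    · rw [Finset.mem_product]
      refine ⟨hzX, ?_⟩
      simp only [Ks, Finset.mem_erase, Finset.mem_Icc]
      have hmz : (0:ℤ) < m := by exact_mod_cast hmpos
      have hLe : L = (p - 1 : ℤ) / m := by
        rw [hL]; push_cast [Nat.cast_sub hppos]; rfl
      refine ⟨fun h => hD0 (by simp [h]), ?_, ?_⟩
      · have : -e ≤ L := by
          rw [hLe, Int.le_ediv_iff_mul_le hmz]; nlinarith
        linarith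
      · rw [hLe, Int.le_ediv_iff_mul_le hmz]; nlinarith
    · simp only
      rw [hDp]; field_simp

lemma Pstep {M : Type} [AddCommGroup M] [DecidableEq M] {G : Finset M} (hG : G.Nonempty) {n k : ℕ}
    (h : n ≤ k) : n • G - n • G ⊆ k • G - k • G := by
  induction k, h using Nat.le_induction with
  | base => rfl
  | succ k _ ih =>
    refine ih.trans fun z hz => ?_
    obtain ⟨u, hu, v, hv, rfl⟩ := Finset.mem_sub.mp hz
    obtain ⟨g, hg⟩ := hG
    rw [succ_nsmul]
    have : u - v = (u + g) - (v + g) := by abel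
    rw [this]
    exact Finset.sub_mem_sub (Finset.add_mem_add hu hg) (Finset.add_mem_add hv hg)

lemma Padd {M : Type} [AddCommGroup M] [DecidableEq M] {G : Finset M} {n k : ℕ} {u v : M}
    (hu : u ∈ n • G - n • G) (hv : v ∈ k • G - k • G) : u + v ∈ (n + k) • G - (n + k) • G := by
  obtain ⟨a, ha, b, hb, rfl⟩ := Finset.mem_sub.mp hu
  obtain ⟨c, hc, d, hd, rfl⟩ := Finset.mem_sub.mp hv
  have : a - b + (c - d) = (a + c) - (b + d) := by abel
  rw [this, add_nsmul]
  exact Finset.sub_mem_sub (Finset.add_mem_add ha hc) (Finset.add_mem_add hb hd)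

lemma Pneg {M : Type} [AddCommGroup M] [DecidableEq M] {G : Finset M} {n : ℕ} {u : M}
    (hu : u ∈ n • G - n • G) : -u ∈ n • G - n • G := by
  obtain ⟨a, ha, b, hb, rfl⟩ := Finset.mem_sub.mp hu
  rw [neg_sub]
  exact Finset.sub_mem_sub hb ha

noncomputable def Ee (r : ℝ) : ℂ := Complex.exp (2 * Real.pi * r * Complex.I)

lemma Ee_add (a b : ℝ) : Ee (a + b) = Ee a * Ee b := by
  unfold Ee; rw [← Complex.exp_add]; push_cast; ring_nf

lemma Ee_re (a : ℝ) : (Ee a).re = Real.cos (2 * Real.pi * a) := by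
  unfold Ee
  have : (2 * Real.pi * a * Complex.I : ℂ) = ((2 * Real.pi * a : ℝ) : ℂ) * Complex.I := by push_cast; ring
  rw [this, Complex.exp_ofReal_mul_I_re]

lemma Ee_inj {a b : ℝ} (h : Ee a = Ee b) (hab : |a - b| < 1) : a = b := by
  unfold Ee at h
  rw [Complex.exp_eq_exp_iff_exists_int] at h
  obtain ⟨n, hn⟩ := h
  have h1 : (a : ℂ) = b + n := by
    have h2 : (2 * Real.pi * Complex.I : ℂ) ≠ 0 := Complex.two_pi_I_ne_zero
    apply mul_left_cancel₀ h2
    linear_combination hn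
  have h3 : a = b + n := by exact_mod_cast h1
  have h4 : |(n:ℝ)| < 1 := by rw [h3] at hab; simpa using hab
  have h5 : n = 0 := by
    have : |n| < 1 := by exact_mod_cast h4
    exact Int.abs_lt_one_iff.mp this
  rw [h3, h5]; simp

lemma Ee_exists {G : Type} [AddCommGroup G] [Finite G] (χ : AddChar G ℂ) (g : G) :
    ∃ r : ℝ, 0 ≤ r ∧ r < 1 ∧ χ g = Ee r := by
  refine ⟨Int.fract ((χ g).arg / (2 * Real.pi)), Int.fract_nonneg _, Int.fract_lt_one _, ?_⟩
  have h1 := Complex.norm_mul_exp_arg_mul_I (χ g)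
  rw [AddChar.norm_apply] at h1
  simp only [Complex.ofReal_one, one_mul] at h1
  refine h1.symm.trans ?_
  unfold Ee
  rw [Complex.exp_eq_exp_iff_exists_int]
  refine ⟨⌊(χ g).arg / (2 * Real.pi)⌋, ?_⟩
  have h2 : ((Int.fract ((χ g).arg / (2 * Real.pi)) : ℝ) : ℂ) =
    (χ g).arg / (2 * Real.pi) - ⌊(χ g).arg / (2 * Real.pi)⌋ := by
    rw [← Int.self_sub_floor]; push_cast; ring
  rw [h2]
  have h3 : (Real.pi : ℂ) ≠ 0 := by exact_mod_cast Real.pi_ne_zero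
  field_simp
  ring

def Lam {m : ℕ} (Γ : Finset (AddChar (ZMod m) ℂ)) : AddSubgroup (ZMod m × (Γ → ℝ)) where
  carrier := {v | ∀ χ : Γ, χ.1 v.1 = Ee (v.2 χ)}
  zero_mem' := by intro χ; simp [Ee]
  add_mem' := by
    intro a b ha hb χ
    simp only [Prod.fst_add, Prod.snd_add, Pi.add_apply]
    rw [AddChar.map_add_eq_mul, Ee_add, ha χ, hb χ]
  neg_mem' := by
    intro a ha χ
    have h0 : Ee (-(a.2 χ)) * Ee (a.2 χ) = 1 := by rw [← Ee_add]; simp [Ee]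
    have h1 : χ.1 (-a.1) * χ.1 a.1 = 1 := by rw [← AddChar.map_add_eq_mul]; simp
    rw [ha χ] at h1
    have h2 : Ee (a.2 χ) ≠ 0 := Complex.exp_ne_zero _
    exact mul_right_cancel₀ h2 (h1.trans h0.symm)

set_option maxHeartbeats 1600000 in
theorem structure_thm (K : ℝ) (hK : 0 < K) : ∃ c C : ℝ, 0 < c ∧ 0 < C ∧
    ∀ A : Finset ℤ, A.Nonempty → ((A + A).card : ℝ) ≤ K * (A.card : ℝ) →
      ∃ A2 ⊆ A, c * (A.card : ℝ) ≤ (A2.card : ℝ) ∧ ∃ f : ℤ → ℝ,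
        (∀ a ∈ A2, ∀ b ∈ A2, a < b → f a + 1 ≤ f b) ∧
        (∀ a ∈ A2, ∀ b ∈ A2, ∀ c ∈ A2, ∀ d ∈ A2, a + b = c + d → f a + f b = f c + f d) ∧
        (∀ a ∈ A2, |f a| ≤ C * (A.card : ℝ)) := by
  classical
  set d : ℕ := ⌈648 * K ^ 24⌉₊ with hd
  obtain ⟨ρ, C, hρ, hρ4, hC, hgeo⟩ := geo d
  set n0 : ℕ := ⌈4 / ρ⌉₊ with hn0
  have hn0pos : 0 < n0 := Nat.ceil_pos.mpr (by positivity)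
  have hn0R : (0:ℝ) < n0 := by exact_mod_cast hn0pos
  have hn0ρ : 4 / (n0:ℝ) ≤ ρ := by
    rw [div_le_iff₀ hn0R]
    have := Nat.le_ceil (4 / ρ)
    rw [div_le_iff₀ hρ] at this
    linarith
  refine ⟨1 / (6 * (n0:ℝ) ^ d), C * (3 * K ^ 12), by positivity, by positivity, ?_⟩
  intro A hA hAA
  have hApos : (0:ℝ) < A.card := by exact_mod_cast hA.card_pos
  set m : ℕ := 2 * (6 • A - 6 • A).card + 1 with hm
  have : NeZero m := ⟨by omega⟩
  have hmK : (m:ℝ) ≤ 3 * K ^ 12 * A.card := by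
    have h1 := Finset.pluennecke_ruzsa_inequality_nsmul_sub_nsmul_add hA A 6 6
    have h1' : ((6 • A - 6 • A).card : ℝ) ≤ ((A + A).card / A.card : ℝ) ^ (6 + 6) * A.card := by
      have h0 := (NNRat.cast_le (K := ℝ)).mpr h1
      push_cast at h0
      exact h0
    have h2 : ((A + A).card / A.card : ℝ) ≤ K := by rw [div_le_iff₀ hApos]; exact hAA
    have h3 : ((6 • A - 6 • A).card : ℝ) ≤ K ^ 12 * A.card := by
      refine h1'.trans ?_
      gcongr
    have h4 : (1:ℝ) ≤ (6 • A - 6 • A).card := by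
      have : 0 < (6 • A - 6 • A).card := Finset.card_pos.mpr (hA.nsmul.sub hA.nsmul)
      exact_mod_cast this
    rw [hm]; push_cast; linarith
  obtain ⟨A1, hA1A, hA1card, φ, hφ⟩ := model A 6 m (by norm_num) (by omega)
  push_cast at hA1card
  have hA1pos : (0:ℝ) < A1.card := by linarith
  have hA1ne : A1.Nonempty := Finset.card_pos.mp (by exact_mod_cast hA1pos)
  set Gr := A1.image fun a => (a, φ a) with hGr
  have hGrne : Gr.Nonempty := hA1ne.image _
  have hmemGr : ∀ a ∈ A1, (a, φ a) ∈ Gr := fun a ha => Finset.mem_image_of_mem _ ha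
  have hP1 : ∀ a ∈ A1, ∀ b ∈ A1, (a - b, φ a - φ b) ∈ 1 • Gr - 1 • Gr := by
    intro a ha b hb
    rw [one_nsmul]
    exact Finset.sub_mem_sub (hmemGr a ha) (hmemGr b hb)
  have hφinj : Set.InjOn φ A1 := by
    intro a ha b hb hab
    have := (hφ _ (Pstep hGrne (by norm_num) (hP1 a ha b hb))).mpr (by simp [hab])
    simp at this
    linarith
  set T := A1.image φ with hT
  have hTcard : T.card = A1.card := Finset.card_image_of_injOn hφinj
  obtain ⟨Γ, hΓ, hbog⟩ := bog T (hA1ne.image _)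
  rw [ZMod.card, hTcard] at hΓ
  have hΓd : Γ.card ≤ d := by
    have h1 : (m:ℝ) ≤ 18 * K ^ 12 * A1.card := by
      have : 3 * K ^ 12 * (A.card:ℝ) ≤ 3 * K ^ 12 * (6 * A1.card) := by gcongr
      linarith
    have h2 : (m:ℝ)^2 ≤ (18 * K ^ 12 * A1.card)^2 := by gcongr
    have h3 : (Γ.card : ℝ) * (A1.card:ℝ)^2 ≤ (648 * K^24) * (A1.card:ℝ)^2 := by
      refine hΓ.trans ?_
      calc _ ≤ 2 * (18 * K ^ 12 * A1.card)^2 := by linarith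
        _ = _ := by ring
    have h4 := le_of_mul_le_mul_right h3 (by positivity)
    exact_mod_cast h4.trans (Nat.le_ceil _)
  let Λ := Lam Γ
  let x : Γ → Λ →+ ℝ := fun χ => AddMonoidHom.mk' (fun v => 4 * v.1.2 χ) (by
    intro a b; simp; ring)
  have hx : ∀ χ (v : Λ), x χ v = 4 * v.1.2 χ := fun _ _ => rfl
  set B1 := Bl Finset.univ x 1 with hB1
  have hinjB : Set.InjOn (fun v : Λ => v.1.1) B1 := by
    intro u hu v hv huv
    simp only at huv
    apply Subtype.ext
    apply Prod.ext huv
    funext χ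
    apply Ee_inj
    · rw [← u.2 χ, ← v.2 χ, huv]
    · have h1 := hu χ (Finset.mem_univ _)
      have h2 := hv χ (Finset.mem_univ _)
      rw [hx, abs_le] at h1 h2
      rw [abs_lt]; constructor <;> linarith
  have hB1fin : B1.Finite := Set.Finite.of_finite_image (Set.toFinite _) hinjB
  have hB1card : B1.ncard ≤ m := by
    have := Set.ncard_le_ncard_of_injOn (t := Set.univ) _ (fun _ _ => Set.mem_univ _) hinjB
    rw [Set.ncard_univ, Nat.card_eq_fintype_card, ZMod.card] at this
    exact this
  have hex : ∀ v ∈ B1, ∃ z ∈ 2 • Gr - 2 • Gr, z.2 = v.1.1 := by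
    intro v hv
    obtain ⟨a, ha, b, hb, c, hc, e, he, h⟩ := hbog v.1.1 (by
      intro χ hχ
      have h1 := hv ⟨χ, hχ⟩ (Finset.mem_univ _)
      rw [hx, abs_le] at h1
      have h2 := v.2 ⟨χ, hχ⟩
      simp only at h2
      rw [h2, Ee_re]
      apply Real.cos_nonneg_of_mem_Icc
      have := Real.pi_pos
      constructor <;> nlinarith)
    rw [hT, Finset.mem_image] at ha hb hc he
    obtain ⟨a, ha, rfl⟩ := ha
    obtain ⟨b, hb, rfl⟩ := hb
    obtain ⟨c, hc, rfl⟩ := hc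
    obtain ⟨e, he, rfl⟩ := he
    refine ⟨_, Pstep hGrne (by norm_num : 1 + 1 ≤ 2) (Padd (hP1 a ha c hc) (hP1 b hb e he)), ?_⟩
    rw [h]; simp only [Prod.snd_add]; abel
  let ψ : Λ → ℝ := fun v =>
    if h : ∃ z ∈ 2 • Gr - 2 • Gr, z.2 = v.1.1 then ((h.choose.1 : ℤ) : ℝ) else 0
  have hψ : ∀ v : Λ, ∀ z ∈ 2 • Gr - 2 • Gr, z.2 = v.1.1 → ψ v = (z.1 : ℝ) := by
    intro v z hz hzv
    have h : ∃ z ∈ 2 • Gr - 2 • Gr, z.2 = v.1.1 := ⟨z, hz, hzv⟩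
    simp only [ψ, dif_pos h]
    obtain ⟨h1, h2⟩ := h.choose_spec
    have h3 := Pstep hGrne (by norm_num : 2 + 2 ≤ 6) (Padd h1 (Pneg hz))
    have h4 := (hφ _ h3).mpr (by simp [h2, hzv])
    simp at h4
    have h5 : h.choose.1 = z.1 := by linarith
    rw [h5]
  have hψadd : ∀ u v, u ∈ B1 → v ∈ B1 → u + v ∈ B1 → ψ (u + v) = ψ u + ψ v := by
    intro u v hu hv huv
    obtain ⟨z1, h1, e1⟩ := hex u hu
    obtain ⟨z2, h2, e2⟩ := hex v hv
    obtain ⟨z3, h3, e3⟩ := hex _ huv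
    rw [hψ _ z1 h1 e1, hψ _ z2 h2 e2, hψ _ z3 h3 e3]
    have h4 := Pstep hGrne (by norm_num : 2 + 2 + 2 ≤ 6) (Padd (Padd h1 h2) (Pneg h3))
    have h5 := (hφ _ h4).mpr (by simp [e1, e2, e3])
    simp at h5
    have h6 : z3.1 = z1.1 + z2.1 := by linarith
    rw [h6]; push_cast; ring
  have hψinj : ∀ u, u ∈ B1 → ψ u = 0 → u = 0 := by
    intro u hu h0
    obtain ⟨z1, h1, e1⟩ := hex u hu
    rw [hψ _ z1 h1 e1] at h0
    have h2 := (hφ _ (Pstep hGrne (by norm_num) h1)).mp (by exact_mod_cast h0)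
    exact hinjB hu (Bl_zero zero_le_one) (by simp [← e1, h2])
  obtain ⟨h, hh1, hh2, hh3⟩ := hgeo Γ Λ Finset.univ x ψ (by simpa using hΓd) hB1fin hψadd hψinj
  choose θ hθ0 hθ1 hθE using fun (χ : Γ) (a : ℤ) => Ee_exists χ.1 (φ a)
  let L : ℤ → Λ := fun a => ⟨(φ a, fun χ => θ χ a), fun χ => hθE χ a⟩
  obtain ⟨cell, _, hcell⟩ := Finset.exists_le_card_fiber_of_nsmul_le_card_of_maps_to
    (s := A1) (t := Fintype.piFinset (fun _ : Γ => Finset.range n0))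
    (f := fun a χ => ⌊n0 * θ χ a⌋₊) (b := (A1.card : ℝ) / (n0:ℝ)^Γ.card)
    (by
      intro a _
      rw [Fintype.mem_piFinset]
      intro χ
      rw [Finset.mem_range, Nat.floor_lt (by have := hθ0 χ a; positivity)]
      nlinarith [hθ1 χ a])
    ⟨fun _ => 0, by rw [Fintype.mem_piFinset]; intro; simpa using hn0pos⟩ (by
      have : (n0:ℝ) ≠ 0 := by positivity
      simp; field_simp; rfl)
  set A2 := A1.filter (fun a => (fun χ => ⌊n0 * θ χ a⌋₊) = cell) with hA2
  have hA2A1 : A2 ⊆ A1 := Finset.filter_subset _ _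
  have hA2card : 1 / (6 * (n0:ℝ) ^ d) * A.card ≤ A2.card := by
    refine le_trans ?_ hcell
    have h1 : (n0:ℝ)^Γ.card ≤ (n0:ℝ)^d := pow_le_pow_right₀ (by exact_mod_cast hn0pos) hΓd
    rw [le_div_iff₀ (by positivity)]
    calc 1 / (6 * (n0:ℝ) ^ d) * A.card * (n0:ℝ)^Γ.card
        ≤ 1 / (6 * (n0:ℝ) ^ d) * (6 * A1.card) * (n0:ℝ)^d := by gcongr
      _ = A1.card := by field_simp
  have hA2ne : A2.Nonempty := by
    apply Finset.card_pos.mp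
    have : (0:ℝ) < A2.card := lt_of_lt_of_le (by positivity) hA2card
    exact_mod_cast this
  obtain ⟨a0, ha0⟩ := hA2ne
  have hLdiff : ∀ a ∈ A2, ∀ b ∈ A2, L a - L b ∈ Bl Finset.univ x ρ := by
    intro a ha b hb χ _
    rw [hx]
    have h1 := congrFun (Finset.mem_filter.mp ha).2 χ
    have h2 := congrFun (Finset.mem_filter.mp hb).2 χ
    have h3 := Nat.floor_le (show 0 ≤ n0 * θ χ a by have := hθ0 χ a; positivity)
    have h4 := Nat.floor_le (show 0 ≤ n0 * θ χ b by have := hθ0 χ b; positivity)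
    have h5 := Nat.lt_floor_add_one (n0 * θ χ a)
    have h6 := Nat.lt_floor_add_one (n0 * θ χ b)
    rw [h1] at h3 h5
    rw [h2] at h4 h6
    have h7 : (L a - L b).1.2 χ = θ χ a - θ χ b := rfl
    rw [h7]
    refine le_trans ?_ hn0ρ
    rw [le_div_iff₀ hn0R, abs_mul, abs_of_pos (by norm_num : (0:ℝ) < 4)]
    have h8 : |θ χ a - θ χ b| * n0 ≤ 1 := by
      have h9 : |(θ χ a - θ χ b) * n0| ≤ 1 := by
        rw [abs_le]
        constructor <;> linarith
      rwa [abs_mul, abs_of_pos hn0R] at h9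
    linarith
  have hψL : ∀ a ∈ A2, ∀ b ∈ A2, ψ (L a - L b) = (a:ℝ) - b := by
    intro a ha b hb
    have := hψ (L a - L b) _ (Pstep hGrne (by norm_num) (hP1 a (hA2A1 ha) b (hA2A1 hb))) rfl
    rw [this]; push_cast; rfl
  have hf : ∀ a ∈ A2, ∀ b ∈ A2, h (L a - L a0) = h (L a - L b) + h (L b - L a0) := by
    intro a ha b hb
    have := hh1 (L a - L b) (L b - L a0) (hLdiff a ha b hb) (hLdiff b hb a0 ha0)
      (by rw [sub_add_sub_cancel]; exact hLdiff a ha a0 ha0)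
    rwa [sub_add_sub_cancel] at this
  refine ⟨A2, hA2A1.trans hA1A, hA2card, fun a => h (L a - L a0), ?_, ?_, ?_⟩
  · intro a ha b hb hab
    have h1 := hh2 (L b - L a) (hLdiff b hb a ha) (by
      rw [hψL b hb a ha]
      have : (a:ℝ) < b := by exact_mod_cast hab
      linarith)
    have := hf b hb a ha
    simp only
    linarith
  · intro a ha b hb c hc e he habce
    have hu := hLdiff a ha c hc
    have hv := hLdiff e he b hb
    have huv : L a - L c - (L e - L b) ∈ B1 := Bl_sub hu hv (by linarith)
    have h1 := hψadd _ (L e - L b) huv (Bl_mono (by linarith) hv) (by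
      rw [sub_add_cancel]; exact Bl_mono (by linarith) hu)
    rw [sub_add_cancel, hψL a ha c hc, hψL e he b hb] at h1
    have h2 : (a:ℝ) + b = c + e := by exact_mod_cast habce
    have h3 := hψinj _ huv (by linarith)
    have h4 := sub_eq_zero.mp h3
    have h5 := hf a ha c hc
    have h6 := hf e he b hb
    simp only
    rw [h5, h6, h4]; ring
  · intro a ha
    refine (hh3 _ (hLdiff a ha a0 ha0)).trans ?_
    have : (B1.ncard : ℝ) ≤ 3 * K ^ 12 * A.card := le_trans (by exact_mod_cast hB1card) hmK
    calc _ ≤ C * (3 * K ^ 12 * A.card) := mul_le_mul_of_nonneg_left this hC.le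
      _ = _ := by ring
/-- The greedy (queue) selection. -/
def queueF (g : ℕ → ℤ) : ℕ → ℤ
  | 0 => g 0
  | j + 1 => min (queueF g j + 1) (g (j + 1))

theorem greedy (n q : ℕ) (g : ℕ → ℤ) (hg : Monotone g)
    (hq : ∀ v, ((Finset.range n).filter (fun j => g j = v)).card ≤ q) :
    ∃ J ⊆ Finset.range n, ∃ Gd ⊆ J,
      (∀ j ∈ Gd, ((J.filter (fun i => i < j)).card : ℤ) = g j - g 0) ∧
      (n : ℤ) ≤ q * (Gd.card + 1) + (g n - g 0) := by
  classical
  set F := queueF g with hF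
  have F0 : F 0 = g 0 := rfl
  have Fs : ∀ j, F (j+1) = min (F j + 1) (g (j+1)) := fun j => rfl
  have Fle : ∀ j, F j ≤ g j := by
    intro j
    cases j with
    | zero => exact le_rfl
    | succ j => rw [Fs]; exact min_le_right _ _
  have Fstep : ∀ j, F (j+1) = F j ∨ F (j+1) = F j + 1 := by
    intro j
    have h1 := Fle j
    have h2 := hg (Nat.le_succ j)
    have h3 := Fs j
    simp only [Nat.succ_eq_add_one] at h2
    omega
  set J := (Finset.range n).filter (fun j => F (j+1) = F j + 1) with hJ
  have hcount : ∀ j, (((Finset.range j).filter (fun j => F (j+1) = F j + 1)).card : ℤ) = F j - F 0 := by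
    intro j
    induction j with
    | zero => simp
    | succ j ih =>
      rw [Finset.range_add_one, Finset.filter_insert]
      split_ifs with h
      · rw [Finset.card_insert_of_notMem (by simp)]; push_cast; rw [ih]; omega
      · rw [ih]; have := Fstep j; omega
  set Gd := J.filter (fun j => F j = g j) with hGd
  refine ⟨J, Finset.filter_subset _ _, Gd, Finset.filter_subset _ _, ?_, ?_⟩
  · intro j hj
    have h1 := (Finset.mem_filter.mp hj).2
    have h2 := Finset.mem_range.mp (Finset.mem_filter.mp (Finset.mem_filter.mp hj).1).1
    rw [← h1, ← F0, ← hcount j]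
    congr 2
    ext i
    simp only [hJ, Finset.mem_filter, Finset.mem_range]
    constructor
    · rintro ⟨⟨_, h⟩, h'⟩; exact ⟨h', h⟩
    · rintro ⟨h', h⟩; exact ⟨⟨by omega, h⟩, h'⟩
  set NS := (Finset.range n).filter (fun j => ¬ F (j+1) = F j + 1) with hNS
  have hNScard : (J.card : ℤ) + NS.card = n := by
    have := Finset.card_filter_add_card_filter_not (s := Finset.range n) (fun j => F (j+1) = F j + 1)
    rw [Finset.card_range] at this
    exact_mod_cast this
  have hNSeq : ∀ j ∈ NS, F (j+1) = F j ∧ F j = g j := by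
    intro j hj
    have h0 := (Finset.mem_filter.mp hj).2
    have h1 := Fle j
    have h2 := hg (Nat.le_succ j)
    have h3 := Fs j
    have h4 := Fstep j
    simp only [Nat.succ_eq_add_one] at h2
    omega
  have hNSV : NS.card ≤ q * (NS.image F).card := by
    apply Finset.card_le_mul_card_image
    intro v _
    refine le_trans (Finset.card_le_card ?_) (hq v)
    intro j hj
    obtain ⟨h1, h2⟩ := Finset.mem_filter.mp hj
    refine Finset.mem_filter.mpr ⟨(Finset.mem_filter.mp h1).1, ?_⟩
    rw [← (hNSeq j h1).2, h2]
  have hV : NS.image F ⊆ insert (F n) (Gd.image F) := by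
    intro v hv
    obtain ⟨j, hj, rfl⟩ := Finset.mem_image.mp hv
    by_cases hvn : F j = F n
    · rw [hvn]; exact Finset.mem_insert_self _ _
    refine Finset.mem_insert_of_mem ?_
    have hjn := Finset.mem_range.mp (Finset.mem_filter.mp hj).1
    have hex : ∃ k, F (j + 1 + k) ≠ F j := ⟨n - (j+1), by
      rw [Nat.add_sub_cancel' hjn]; exact fun h => hvn h.symm⟩
    have hspec := Nat.find_spec hex
    have hle : Nat.find hex ≤ n - (j+1) := Nat.find_min' hex (by
      rw [Nat.add_sub_cancel' hjn]; exact fun h => hvn h.symm)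
    have hmin : ∀ k < Nat.find hex, F (j + 1 + k) = F j := fun k hk => by
      simpa using Nat.find_min hex hk
    generalize Nat.find hex = k0 at *
    obtain ⟨h5, h6⟩ := hNSeq j hj
    cases k0 with
    | zero => exact absurd h5 hspec
    | succ k =>
      have h7 := hmin k (Nat.lt_succ_self _)
      have h8 : F (j + k) = F j := by
        cases k with
        | zero => rfl
        | succ k => have := hmin k (by omega); rwa [show j + (k+1) = j + 1 + k by ring]
      have h9 := Fs (j + k)
      rw [show j + k + 1 = j + 1 + k by ring] at h9
      have h10 := Fstep (j + 1 + k)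
      rw [show j + 1 + (k + 1) = j + 1 + k + 1 by ring] at hspec
      refine Finset.mem_image.mpr ⟨j + 1 + k, ?_, h7⟩
      refine Finset.mem_filter.mpr ⟨Finset.mem_filter.mpr ⟨Finset.mem_range.mpr (by omega), ?_⟩, ?_⟩ <;> omega
  have hVcard : (NS.image F).card ≤ Gd.card + 1 :=
    (Finset.card_le_card hV).trans ((Finset.card_insert_le _ _).trans
      (Nat.add_le_add_right Finset.card_image_le 1))
  have h1 : NS.card ≤ q * (Gd.card + 1) := hNSV.trans (Nat.mul_le_mul_left _ hVcard)
  have h2 : (NS.card : ℤ) ≤ q * (Gd.card + 1) := by exact_mod_cast h1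
  have h3 := hcount n
  have h4 := Fle n
  rw [← hJ] at h3
  linarith

lemma idx_eq (A : Finset ℤ) (k : Fin A.card) :
    (A.filter (fun x => x < (A.orderIsoOfFin rfl k : ℤ))).card = (k : ℕ) := by
  have : A.filter (fun x => x < (A.orderIsoOfFin rfl k : ℤ)) =
      (Finset.Iio k).image (fun i => (A.orderIsoOfFin rfl i : ℤ)) := by
    ext x
    simp only [Finset.mem_filter, Finset.mem_image, Finset.mem_Iio]
    constructor
    · rintro ⟨hx, hlt⟩
      refine ⟨(A.orderIsoOfFin rfl).symm ⟨x, hx⟩, ?_, by simp⟩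
      rw [← (A.orderIsoOfFin rfl).lt_iff_lt]
      simpa [← Subtype.coe_lt_coe] using hlt
    · rintro ⟨i, hi, rfl⟩
      refine ⟨(A.orderIsoOfFin rfl i).2, ?_⟩
      exact (A.orderIsoOfFin rfl).lt_iff_lt.mpr hi
  rw [this, Finset.card_image_of_injective, Fin.card_Iio]
  intro a b h
  exact (A.orderIsoOfFin rfl).injective (Subtype.ext h)

lemma energy_le (A G : Finset ℤ) (hG : G ⊆ A) :
    Finset.addEnergy
      (G.image fun a => (a, ((A.filter (fun x => x < a)).card : ℤ)))
      (G.image fun a => (a, ((A.filter (fun x => x < a)).card : ℤ))) ≤ indexedEnergy A := by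
  classical
  unfold Finset.addEnergy indexedEnergy
  let P : Fin A.card → ℤ × ℤ := fun k => ((A.orderIsoOfFin rfl k : ℤ), ((k : ℕ) : ℤ))
  have hP : ∀ z ∈ (G.image fun a => (a, ((A.filter (fun x => x < a)).card : ℤ))), ∃ k, P k = z := by
    intro z hz
    obtain ⟨a, ha, rfl⟩ := Finset.mem_image.mp hz
    refine ⟨(A.orderIsoOfFin rfl).symm ⟨a, hG ha⟩, ?_⟩
    simp only [P]
    rw [← idx_eq]
    simp
  apply Finset.card_le_card_of_surjOn (fun q => ((P q.1, P q.2.2.1), (P q.2.1, P q.2.2.2)))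
  rintro ⟨⟨z1, z3⟩, z2, z4⟩ hz
  simp only [Finset.coe_filter, Finset.mem_product, Set.mem_setOf_eq] at hz
  obtain ⟨⟨⟨h1, h3⟩, h2, h4⟩, h⟩ := hz
  obtain ⟨k1, rfl⟩ := hP _ h1
  obtain ⟨k2, rfl⟩ := hP _ h2
  obtain ⟨k3, rfl⟩ := hP _ h3
  obtain ⟨k4, rfl⟩ := hP _ h4
  refine ⟨(k1, k2, k3, k4), ?_, rfl⟩
  simp only [Finset.coe_filter, Finset.mem_univ, true_and, Set.mem_setOf_eq]
  simp only [P, Prod.mk_add_mk, Prod.mk.injEq] at h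
  exact ⟨h.1, by exact_mod_cast h.2⟩

theorem exists_subset_large_indexed_energy :
    ∀ K : ℝ, 0 < K → ∃ c₁ c₂ : ℝ, 0 < c₁ ∧ 0 < c₂ ∧
      ∀ A : Finset ℤ, A.Nonempty → ((A + A).card : ℝ) ≤ K * (A.card : ℝ) →
        ∃ A' ⊆ A, c₂ * (A.card : ℝ) ≤ (A'.card : ℝ) ∧
          c₁ * (A'.card : ℝ) ^ 3 ≤ (indexedEnergy A' : ℝ) := by
  classical
  intro K hK
  obtain ⟨c, C, hc, hC, hst⟩ := structure_thm K hK
  set ε : ℝ := c / (8 * C) with hε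
  have hεpos : 0 < ε := by positivity
  set q : ℕ := ⌈1 / ε⌉₊ + 2 with hq
  have hqpos : (0:ℝ) < q := by rw [hq]; push_cast; positivity
  set γ : ℝ := c / (2 * q) with hγ
  have hγpos : 0 < γ := by positivity
  refine ⟨min 1 (γ ^ 4 / (2 * K)), min (c / (4 * (q + 1))) γ, by positivity, by positivity, ?_⟩
  intro A hA hAA
  obtain ⟨A2, hA2A, hA2c, f, hf1, hf2, hf3⟩ := hst A hA hAA
  have hApos : (0:ℝ) < A.card := by exact_mod_cast hA.card_pos
  have hA2pos : (0:ℝ) < A2.card := lt_of_lt_of_le (by positivity) hA2c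
  set n := A2.card with hn
  have hnpos : 0 < n := by exact_mod_cast hA2pos
  by_cases hsmall : (n:ℝ) < 4 * (q + 1)
  · obtain ⟨a, ha⟩ := hA
    refine ⟨{a}, by simpa using ha, ?_, ?_⟩
    · simp only [Finset.card_singleton, Nat.cast_one]
      have h1 : c * A.card ≤ 4 * (q + 1) := by linarith
      calc _ ≤ c / (4 * (q + 1)) * A.card := by gcongr; exact min_le_left _ _
        _ = c * A.card / (4 * (q+1)) := by ring
        _ ≤ 1 := by rw [div_le_one (by positivity)]; exact h1
    · have h1 := energy_le {a} {a} (Finset.Subset.refl _)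
      have h2 : 0 < indexedEnergy {a} := lt_of_lt_of_le (Finset.addEnergy_self_pos (by simp)) h1
      have h3 : (1:ℝ) ≤ indexedEnergy {a} := by exact_mod_cast h2
      simp only [Finset.card_singleton, Nat.cast_one, one_pow, mul_one]
      exact (min_le_left _ _).trans h3
  push Not at hsmall
  -- enumeration
  let b : ℕ → ℤ := fun j => A2.orderEmbOfFin rfl ⟨min j (n-1), by omega⟩
  have hbmem : ∀ j, b j ∈ A2 := fun j => Finset.orderEmbOfFin_mem _ _ _
  have hblt : ∀ i j, i < j → j < n → b i < b j := by
    intro i j hij hj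
    simp only [b]
    rw [OrderEmbedding.lt_iff_lt, Fin.mk_lt_mk]
    omega
  have hble : Monotone b := by
    intro i j hij
    simp only [b]
    rw [OrderEmbedding.le_iff_le, Fin.mk_le_mk]
    omega
  have hfmono : ∀ a ∈ A2, ∀ a' ∈ A2, a ≤ a' → f a ≤ f a' := by
    intro a ha a' ha' h
    rcases h.eq_or_lt with rfl | h
    · exact le_rfl
    · have := hf1 a ha a' ha' h; linarith
  let g : ℕ → ℤ := fun j => ⌊ε * f (b j)⌋
  have hg : Monotone g := by
    intro i j hij
    have := hfmono _ (hbmem i) _ (hbmem j) (hble hij)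
    exact Int.floor_le_floor (by gcongr)
  have hfib : ∀ v, ((Finset.range n).filter (fun j => g j = v)).card ≤ q := by
    intro v
    have hmaps : ∀ j ∈ (Finset.range n).filter (fun j => g j = v),
        ⌊f (b j)⌋ ∈ Finset.Icc ⌊(v:ℝ) / ε⌋ ⌊((v:ℝ)+1)/ε⌋ := by
      intro j hj
      have h1 : ⌊ε * f (b j)⌋ = v := (Finset.mem_filter.mp hj).2
      rw [Int.floor_eq_iff] at h1
      rw [Finset.mem_Icc]
      constructor
      · apply Int.floor_le_floor
        rw [div_le_iff₀ hεpos]; linarith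
      · apply Int.floor_le_floor
        rw [le_div_iff₀ hεpos]; linarith
    have hinj : Set.InjOn (fun j => ⌊f (b j)⌋) ((Finset.range n).filter (fun j => g j = v)) := by
      have hl : ∀ i j, i < j → j < n → ⌊f (b i)⌋ < ⌊f (b j)⌋ := by
        intro i j hij hj
        have h1 := hf1 _ (hbmem i) _ (hbmem j) (hblt i j hij hj)
        have h2 := Int.floor_le_floor h1
        rw [Int.floor_add_one] at h2
        omega
      intro i hi j hj hij
      have hi' := Finset.mem_range.mp (Finset.mem_filter.mp hi).1
      have hj' := Finset.mem_range.mp (Finset.mem_filter.mp hj).1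
      simp only at hij
      rcases lt_trichotomy i j with h | h | h
      · have := hl i j h hj'; omega
      · exact h
      · have := hl j i h hi'; omega
    refine (Finset.card_le_card_of_injOn _ hmaps hinj).trans ?_
    rw [Int.card_Icc, Int.toNat_le]
    have h1 := Int.floor_le (((v:ℝ)+1)/ε)
    have h2 := Int.lt_floor_add_one ((v:ℝ)/ε)
    have h3 : ((v:ℝ)+1)/ε = v/ε + 1/ε := by ring
    have h4 := Nat.le_ceil (1/ε)
    have h5 : (⌊((v:ℝ)+1)/ε⌋ : ℝ) < ⌊(v:ℝ)/ε⌋ + 1 + ⌈1/ε⌉₊ := by linarith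
    have h6 : ⌊((v:ℝ)+1)/ε⌋ < ⌊(v:ℝ)/ε⌋ + 1 + ⌈1/ε⌉₊ := by exact_mod_cast h5
    rw [hq]; push_cast; omega
  obtain ⟨J, hJn, Gd, hGdJ, hidx, hcnt⟩ := greedy n q g hg hfib
  have hrange : ((g n - g 0 : ℤ) : ℝ) ≤ n / 4 + 1 := by
    have h1 := Int.floor_le (ε * f (b n))
    have h2 := Int.lt_floor_add_one (ε * f (b 0))
    have h3 := abs_le.mp (hf3 _ (hbmem n))
    have h4 := abs_le.mp (hf3 _ (hbmem 0))
    have h5 : ε * (f (b n) - f (b 0)) ≤ ε * (2 * C * A.card) := by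
      gcongr; linarith
    have h6 : ε * (2 * C * A.card) = c * A.card / 4 := by rw [hε]; field_simp; norm_num
    simp only [g]
    push_cast
    linarith
  have hGdcard : γ * A.card ≤ Gd.card := by
    have h1 : (n:ℝ) ≤ q * (Gd.card + 1) + ((g n - g 0 : ℤ) : ℝ) := by exact_mod_cast hcnt
    have h2 : (n:ℝ) / 2 ≤ q * Gd.card := by linarith
    rw [hγ, div_mul_eq_mul_div, div_le_iff₀ (by positivity)]
    linarith
  have hbinj : Set.InjOn b (Finset.range n) := by
    intro i hi j hj hij
    have hi' := Finset.mem_range.mp hi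
    have hj' := Finset.mem_range.mp hj
    rcases lt_trichotomy i j with h | h | h
    · have := hblt i j h hj'; omega
    · exact h
    · have := hblt j i h hi'; omega
  set A' := J.image b with hA'
  set Gs := Gd.image b with hGs
  have hGsA' : Gs ⊆ A' := Finset.image_subset_image hGdJ
  have hA'A2 : A' ⊆ A2 := by
    intro a ha
    obtain ⟨j, _, rfl⟩ := Finset.mem_image.mp ha
    exact hbmem j
  have hGscard : Gs.card = Gd.card :=
    Finset.card_image_of_injOn (hbinj.mono (by exact_mod_cast hGdJ.trans hJn))
  have hidx' : ∀ a ∈ Gs, ((A'.filter (fun x => x < a)).card : ℤ) = ⌊ε * f a⌋ - g 0 := by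
    intro a ha
    obtain ⟨j, hj, rfl⟩ := Finset.mem_image.mp ha
    rw [← show g j = ⌊ε * f (b j)⌋ from rfl, ← hidx j hj]
    have hjn := Finset.mem_range.mp (hJn (hGdJ hj))
    have : A'.filter (fun x => x < b j) = (J.filter (fun i => i < j)).image b := by
      ext x
      simp only [hA', Finset.mem_filter, Finset.mem_image]
      constructor
      · rintro ⟨⟨i, hi, rfl⟩, hlt⟩
        refine ⟨i, ⟨hi, ?_⟩, rfl⟩
        by_contra hcon
        push Not at hcon
        exact absurd (hble hcon) (not_le.mpr hlt)
      · rintro ⟨i, ⟨hi, hij⟩, rfl⟩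
        exact ⟨⟨i, hi, rfl⟩, hblt i j hij hjn⟩
    rw [this, Finset.card_image_of_injOn]
    refine hbinj.mono ?_
    intro i hi
    exact hJn (Finset.mem_filter.mp hi).1
  set B := Gs.image fun a => (a, ((A'.filter (fun x => x < a)).card : ℤ)) with hB
  have hBcard : B.card = Gd.card := by
    rw [hB, Finset.card_image_of_injective _ (fun a a' h => (Prod.mk.inj h).1), hGscard]
  have hEB : B.addEnergy B ≤ indexedEnergy A' := energy_le A' Gs hGsA'
  have hBB : (B + B).card ≤ 2 * (A + A).card := by
    let Sf : ℤ → ℝ := fun s => if h : ∃ p : ℤ × ℤ, p.1 ∈ A2 ∧ p.2 ∈ A2 ∧ p.1 + p.2 = s then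
      ε * (f h.choose.1 + f h.choose.2) else 0
    have hSf : ∀ a ∈ A2, ∀ a' ∈ A2, Sf (a + a') = ε * (f a + f a') := by
      intro a ha a' ha'
      have h : ∃ p : ℤ × ℤ, p.1 ∈ A2 ∧ p.2 ∈ A2 ∧ p.1 + p.2 = a + a' := ⟨(a, a'), ha, ha', rfl⟩
      simp only [Sf, dif_pos h]
      obtain ⟨h1, h2, h3⟩ := h.choose_spec
      rw [hf2 _ h1 _ h2 a ha a' ha' h3]
    have hsub : B + B ⊆ ((A + A) ×ˢ ({0, 1} : Finset ℤ)).image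
        (fun p => (p.1, ⌊Sf p.1⌋ - p.2 - 2 * g 0)) := by
      intro z hz
      obtain ⟨z1, hz1, z2, hz2, rfl⟩ := Finset.mem_add.mp hz
      obtain ⟨a, ha, rfl⟩ := Finset.mem_image.mp hz1
      obtain ⟨a', ha', rfl⟩ := Finset.mem_image.mp hz2
      have haA := hA'A2 (hGsA' ha)
      have haA' := hA'A2 (hGsA' ha')
      rw [hidx' a ha, hidx' a' ha']
      have h1 := Int.le_floor_add (ε * f a) (ε * f a')
      have h2 := Int.le_floor_add_floor (ε * f a) (ε * f a')
      refine Finset.mem_image.mpr ⟨(a + a', ⌊ε * f a + ε * f a'⌋ - (⌊ε * f a⌋ + ⌊ε * f a'⌋)), ?_, ?_⟩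
      · refine Finset.mem_product.mpr ⟨Finset.add_mem_add (hA2A haA) (hA2A haA'), ?_⟩
        simp only [Finset.mem_insert, Finset.mem_singleton]
        omega
      · simp only [hSf a haA a' haA', Prod.mk_add_mk, mul_add]
        congr 1
        ring
    refine (Finset.card_le_card hsub).trans (Finset.card_image_le.trans ?_)
    rw [Finset.card_product]
    simp [mul_comm]
  have hA'card : (A'.card : ℝ) ≤ A.card := by
    exact_mod_cast Finset.card_le_card (hA'A2.trans hA2A)
  refine ⟨A', hA'A2.trans hA2A, ?_, ?_⟩
  · calc _ ≤ γ * A.card := by gcongr; exact min_le_right _ _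
      _ ≤ Gd.card := hGdcard
      _ ≤ A'.card := by rw [← hGscard]; exact_mod_cast Finset.card_le_card hGsA'
  · have h1 := Finset.le_card_add_mul_addEnergy B B
    rw [hBcard] at h1
    have h2 : (Gd.card : ℝ)^2 * (Gd.card : ℝ)^2 ≤ (B + B).card * (B.addEnergy B : ℝ) := by
      exact_mod_cast h1
    have h3 : ((B + B).card : ℝ) ≤ 2 * (K * A.card) := by
      have : ((B + B).card : ℝ) ≤ 2 * (A + A).card := by exact_mod_cast hBB
      linarith
    have h4 : (B.addEnergy B : ℝ) ≤ indexedEnergy A' := by exact_mod_cast hEB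
    have h5 : (γ * A.card)^4 ≤ 2 * (K * A.card) * indexedEnergy A' := by
      calc (γ * A.card)^4 ≤ (Gd.card : ℝ)^4 := by gcongr
        _ = (Gd.card : ℝ)^2 * (Gd.card : ℝ)^2 := by ring
        _ ≤ _ := h2
        _ ≤ _ := by gcongr
    have h6 : γ ^ 4 * (A.card:ℝ)^3 ≤ 2 * K * indexedEnergy A' := by
      refine le_of_mul_le_mul_right ?_ hApos
      calc _ = (γ * A.card)^4 := by ring
        _ ≤ _ := h5
        _ = _ := by ring
    calc _ ≤ γ ^ 4 / (2 * K) * (A.card : ℝ)^3 := by gcongr; exact min_le_right _ _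
      _ = (γ ^ 4 * (A.card:ℝ)^3) / (2 * K) := by ring
      _ ≤ _ := by rw [div_le_iff₀ (by positivity)]; linarith
end

section
/- For every real δ > 0 there exist constants c₀ > 0, c₁ > 0, and a positive integer N such that the following holds. If n > N and A ⊆ [1, n] ∩ ℤ with |A| ≥ δn, then there exists a subset A' ⊆ A with |A'| ≥ c₁·|A| and EI(A') ≥ c₀·|A|³. -/
open Finset in
lemma greedy_exists (L : ℤ) (A : Finset ℤ) : ∃ B ⊆ A,
    (∀ b ∈ B, L * (#(B.filter (· ≤ b)) : ℤ) ≤ b) ∧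
    (∀ a ∈ A, a ∉ B → a < L * ((#(B.filter (· ≤ a)) : ℤ) + 1)) := by
  induction A using Finset.induction_on_max with
  | empty => exact ⟨∅, by simp⟩
  | insert a s hs ih =>
    obtain ⟨B, hBs, h1, h2⟩ := ih
    have hlt : ∀ b ∈ B, b < a := fun b hb => hs b (hBs hb)
    have haB : a ∉ B := fun h => lt_irrefl _ (hlt a h)
    have hfa : B.filter (· ≤ a) = B := by
      apply Finset.filter_true_of_mem
      intro b hb; exact (hlt b hb).le
    by_cases h : L * ((#B : ℤ) + 1) ≤ a
    · have hfx : ∀ x, x < a → (insert a B).filter (· ≤ x) = B.filter (· ≤ x) := by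
        intro x hx
        rw [Finset.filter_insert, if_neg (by omega)]
      refine ⟨insert a B, Finset.insert_subset_insert _ hBs, ?_, ?_⟩
      · intro b hb
        rcases Finset.mem_insert.1 hb with rfl | hb
        · rw [Finset.filter_insert, if_pos le_rfl, hfa, Finset.card_insert_of_notMem haB]
          push_cast; exact h
        · rw [hfx b (hlt b hb)]; exact h1 b hb
      · intro x hx hxB
        rcases Finset.mem_insert.1 hx with rfl | hx
        · exact absurd (Finset.mem_insert_self _ _) hxB
        · rw [hfx x (hs x hx)]
          exact h2 x hx (fun h => hxB (Finset.mem_insert_of_mem h))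
    · refine ⟨B, hBs.trans (Finset.subset_insert _ _), h1, ?_⟩
      intro x hx hxB
      rcases Finset.mem_insert.1 hx with rfl | hx
      · rw [hfa]; omega
      · exact h2 x hx hxB

open Finset in
lemma rank_eq (B : Finset ℤ) (i : Fin #B) :
    #(B.filter (· ≤ (B.orderIsoOfFin rfl i : ℤ))) = (i : ℕ) + 1 := by
  have : B.filter (· ≤ (B.orderIsoOfFin rfl i : ℤ)) =
      (Finset.Iic i).image (fun j => (B.orderIsoOfFin rfl j : ℤ)) := by
    ext x
    simp only [Finset.mem_filter, Finset.mem_image, Finset.mem_Iic]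
    constructor
    · rintro ⟨hx, hle⟩
      refine ⟨(B.orderIsoOfFin rfl).symm ⟨x, hx⟩, ?_, by simp⟩
      rw [OrderIso.symm_apply_le]
      exact hle
    · rintro ⟨j, hj, rfl⟩
      refine ⟨(B.orderIsoOfFin rfl j).2, ?_⟩
      exact_mod_cast (B.orderIsoOfFin rfl).monotone hj
  rw [this, Finset.card_image_of_injective, Fin.card_Iic]
  intro j k h
  exact (B.orderIsoOfFin rfl).injective (Subtype.ext h)

open Finset Pointwise in
lemma energy_bound (L : ℤ) (hL : 0 < L) (n : ℕ) (B : Finset ℤ) (hB : B ⊆ Finset.Icc 1 (n : ℤ))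
    (k : ℕ)
    (hk : k ≤ #(B.filter (fun b => L * (#(B.filter (· ≤ b)) : ℤ) ≤ b ∧
      b < L * ((#(B.filter (· ≤ b)) : ℤ) + 1)))) :
    (k : ℤ) ^ 4 ≤ ((2 * n + 1) * (2 * L)) * indexedEnergy B := by
  classical
  set e := B.orderIsoOfFin rfl with he
  let p : Fin #B → ℤ × ℤ := fun i => ((i : ℤ) + 1, (e i : ℤ) - L * ((i : ℤ) + 1))
  have hp : Function.Injective p := by
    intro i j h
    have := congrArg Prod.fst h
    simp only [p] at this
    apply Fin.ext; omega
  let I : Finset (Fin #B) := Finset.univ.filter (fun i =>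
    L * ((i : ℤ) + 1) ≤ (e i : ℤ) ∧ (e i : ℤ) < L * ((i : ℤ) + 1 + 1))
  have hI : k ≤ #I := by
    refine hk.trans ?_
    apply Finset.card_le_card_of_surjOn (fun i => (e i : ℤ))
    intro b hb
    simp only [Finset.coe_filter, Set.mem_ofPred_eq] at hb
    obtain ⟨hb, h1, h2⟩ := hb
    have hr := rank_eq B (e.symm ⟨b, hb⟩)
    rw [← he] at hr
    simp only [OrderIso.apply_symm_apply] at hr
    rw [hr] at h1 h2
    push_cast at h1 h2
    refine ⟨e.symm ⟨b, hb⟩, ?_, by simp⟩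
    simp only [I, Finset.coe_filter, Set.mem_ofPred_eq, Finset.mem_univ, true_and,
      OrderIso.apply_symm_apply]
    exact ⟨h1, h2⟩
  let H : Finset (ℤ × ℤ) := I.image p
  have hH : #H = #I := Finset.card_image_of_injective _ hp
  have hE : Finset.addEnergy H H ≤ indexedEnergy B := by
    unfold Finset.addEnergy indexedEnergy
    apply Finset.card_le_card_of_surjOn (fun q => ((p q.1, p q.2.2.1), (p q.2.1, p q.2.2.2)))
    rintro ⟨⟨x, y⟩, ⟨z, w⟩⟩ hx
    simp only [H, Finset.coe_filter, Set.mem_ofPred_eq, Finset.mem_product, Finset.mem_image] at hx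
    obtain ⟨⟨⟨⟨i, _, rfl⟩, ⟨j, _, rfl⟩⟩, ⟨k, _, rfl⟩, ⟨l, _, rfl⟩⟩, hsum⟩ := hx
    refine ⟨(i, k, j, l), ?_, rfl⟩
    have h1 := congrArg Prod.fst hsum
    have h2 := congrArg Prod.snd hsum
    simp only [p, Prod.fst_add, Prod.snd_add] at h1 h2
    simp only [Finset.coe_filter, Set.mem_ofPred_eq, Finset.mem_univ, true_and]
    constructor
    · rw [← he]; linear_combination h2 + L * h1
    · omega
  have hsub : H + H ⊆ (Finset.Icc 0 (2 * n : ℤ)) ×ˢ (Finset.Ico 0 (2 * L)) := by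
    intro x hx
    obtain ⟨y, hy, z, hz, rfl⟩ := Finset.mem_add.1 hx
    have key : ∀ y ∈ H, 0 ≤ y.1 ∧ y.1 ≤ n ∧ 0 ≤ y.2 ∧ y.2 < L := by
      intro y hy
      obtain ⟨i, hi, rfl⟩ := Finset.mem_image.1 hy
      simp only [I, Finset.mem_filter, Finset.mem_univ, true_and] at hi
      have := Finset.mem_Icc.1 (hB (e i).2)
      refine ⟨by simp only [p]; omega, ?_, by simp only [p]; linarith, by simp only [p]; linarith⟩
      simp only [p]
      have : (0 : ℤ) ≤ i := by omega
      nlinarith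
    have := key y hy
    have := key z hz
    simp only [Finset.mem_product, Finset.mem_Icc, Finset.mem_Ico, Prod.fst_add, Prod.snd_add]
    omega
  have hc : (#(H + H) : ℤ) ≤ (2 * n + 1) * (2 * L) := by
    have h := Finset.card_le_card hsub
    rw [Finset.card_product, Int.card_Icc, Int.card_Ico] at h
    zify at h
    rw [Int.toNat_of_nonneg (by omega), Int.toNat_of_nonneg (by omega)] at h
    linarith
  have hcs := Finset.le_card_add_mul_addEnergy H H
  zify at hcs hE hI
  rw [hH] at hcs
  calc (k : ℤ) ^ 4 ≤ (#I : ℤ) ^ 4 := by gcongr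
    _ = (#I : ℤ) ^ 2 * (#I : ℤ) ^ 2 := by ring
    _ ≤ _ := hcs
    _ ≤ _ := by gcongr

open Finset in
lemma good_bound (L : ℤ) (hL : 0 < L) (A B : Finset ℤ) (hA : ∀ a ∈ A, 0 < a) (hBA : B ⊆ A)
    (h1 : ∀ b ∈ B, L * (#(B.filter (· ≤ b)) : ℤ) ≤ b)
    (h2 : ∀ a ∈ A, a ∉ B → a < L * ((#(B.filter (· ≤ a)) : ℤ) + 1)) :
    (#(A \ B) : ℤ) ≤ L * (#(B.filter (fun b => L * (#(B.filter (· ≤ b)) : ℤ) ≤ b ∧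
      b < L * ((#(B.filter (· ≤ b)) : ℤ) + 1))) + 1) := by
  set G := B.filter (fun b => L * (#(B.filter (· ≤ b)) : ℤ) ≤ b ∧
      b < L * ((#(B.filter (· ≤ b)) : ℤ) + 1)) with hG
  have himg : (A \ B).image (· / L) ⊆ insert 0 (G.image (· / L)) := by
    intro q hq
    obtain ⟨a, ha, rfl⟩ := Finset.mem_image.1 hq
    obtain ⟨haA, haB⟩ := Finset.mem_sdiff.1 ha
    have h := h2 a haA haB
    rw [Finset.mem_insert]
    rcases Finset.eq_empty_or_nonempty (B.filter (· ≤ a)) with he | he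
    · left
      rw [he] at h
      apply Int.ediv_eq_zero_of_lt (hA a haA).le
      simpa using h
    · right
      have hm := Finset.max'_mem _ he
      set b := (B.filter (· ≤ a)).max' he with hb
      obtain ⟨hbB, hba⟩ := Finset.mem_filter.1 hm
      have hf : B.filter (· ≤ b) = B.filter (· ≤ a) := by
        ext x
        simp only [Finset.mem_filter, and_congr_right_iff]
        intro hx
        exact ⟨fun h => h.trans hba, fun h => Finset.le_max' _ _ (Finset.mem_filter.2 ⟨hx, h⟩)⟩
      have hb1 := h1 b hbB
      rw [← hf] at h
      have hbG : b ∈ G := Finset.mem_filter.2 ⟨hbB, hb1, by linarith⟩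
      refine Finset.mem_image.2 ⟨b, hbG, ?_⟩
      have e1 : b / L = (#(B.filter (· ≤ b)) : ℤ) := by
        apply le_antisymm
        · exact Int.lt_add_one_iff.1 (Int.ediv_lt_of_lt_mul hL (by linarith))
        · exact Int.le_ediv_of_mul_le hL (by linarith)
      have e2 : a / L = (#(B.filter (· ≤ b)) : ℤ) := by
        apply le_antisymm
        · exact Int.lt_add_one_iff.1 (Int.ediv_lt_of_lt_mul hL (by linarith))
        · exact Int.le_ediv_of_mul_le hL (by linarith)
      simp only [e1, e2]
  have hcard := Finset.card_le_mul_card_image (f := (· / L)) (A \ B) L.toNat (by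
    intro q _
    have : (A \ B).filter (fun a => a / L = q) ⊆ Finset.Ico (L * q) (L * q + L) := by
      intro a ha
      have h := (Finset.mem_filter.1 ha).2
      have := Int.mul_ediv_add_emod a L
      have := Int.emod_nonneg a hL.ne'
      have := Int.emod_lt_of_pos a hL
      rw [Finset.mem_Ico, ← h]
      constructor <;> linarith
    have := Finset.card_le_card this
    rw [Int.card_Ico] at this
    simpa using this)
  have hle : #((A \ B).image (· / L)) ≤ #G + 1 := by
    refine (Finset.card_le_card himg).trans ((Finset.card_insert_le _ _).trans ?_)
    have := Finset.card_image_le (s := G) (f := (· / L))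
    omega
  zify at hcard hle
  rw [Int.toNat_of_nonneg hL.le] at hcard
  exact hcard.trans (by gcongr)

open Finset in
theorem dense_interval_indexed_energy :
    ∀ δ : ℝ, 0 < δ → ∃ (c₀ c₁ : ℝ) (N : ℕ), 0 < c₀ ∧ 0 < c₁ ∧ 0 < N ∧
      ∀ n : ℕ, N < n → ∀ A : Finset ℤ, A ⊆ Finset.Icc 1 (n : ℤ) →
        δ * (n : ℝ) ≤ (A.card : ℝ) →
        ∃ A' ⊆ A, c₁ * (A.card : ℝ) ≤ (A'.card : ℝ) ∧
          c₀ * (A.card : ℝ) ^ 3 ≤ (indexedEnergy A' : ℝ) := by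
  intro δ hδ
  obtain ⟨L, hL⟩ := exists_nat_gt (2 / δ)
  have hL0 : (0 : ℝ) < L := lt_trans (by positivity) hL
  have hLn : 0 < L := by exact_mod_cast hL0
  have hLδ : 2 ≤ δ * L := by
    rw [div_lt_iff₀ hδ] at hL; linarith
  refine ⟨1 / (96 * L ^ 9), 1 / (2 * L ^ 2), 2 * L ^ 2, by positivity, by positivity,
    by positivity, ?_⟩
  intro n hn A hA hcard
  obtain ⟨B, hBA, h1, h2⟩ := greedy_exists (L : ℤ) A
  have hgood := good_bound (L : ℤ) (by exact_mod_cast hLn) A B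
    (fun a ha => by have := Finset.mem_Icc.1 (hA ha); omega) hBA h1 h2
  have hen := energy_bound (L : ℤ) (by exact_mod_cast hLn) n B (hBA.trans hA) _ le_rfl
  have hGB := Finset.card_filter_le B (fun b => (L : ℤ) * (#(B.filter (· ≤ b)) : ℤ) ≤ b ∧
      b < L * ((#(B.filter (· ≤ b)) : ℤ) + 1))
  set k := #(B.filter (fun b => (L : ℤ) * (#(B.filter (· ≤ b)) : ℤ) ≤ b ∧
      b < L * ((#(B.filter (· ≤ b)) : ℤ) + 1))) with hk
  have hBn : (L : ℤ) * #B ≤ n := by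
    rcases B.eq_empty_or_nonempty with rfl | hne
    · simp
    · have h := h1 _ (Finset.max'_mem B hne)
      have hf : B.filter (· ≤ B.max' hne) = B :=
        Finset.filter_true_of_mem (fun b hb => Finset.le_max' _ _ hb)
      rw [hf] at h
      exact h.trans (Finset.mem_Icc.1 (hA (hBA (Finset.max'_mem B hne)))).2
  have hAn : #A ≤ n := by
    have := Finset.card_le_card hA
    simpa using this
  have hsd := Finset.card_sdiff_add_card_eq_card hBA
  have hBnR : (L : ℝ) * #B ≤ n := by exact_mod_cast hBn
  have hAnR : (#A : ℝ) ≤ n := by exact_mod_cast hAn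
  have hsdR : (#(A \ B) : ℝ) + #B = #A := by exact_mod_cast hsd
  have hgR : (#(A \ B) : ℝ) ≤ L * (k + 1) := by exact_mod_cast hgood
  have henR : (k : ℝ) ^ 4 ≤ ((2 * n + 1) * (2 * L)) * indexedEnergy B := by exact_mod_cast hen
  have hGBR : (k : ℝ) ≤ #B := by exact_mod_cast hGB
  have hnR : 2 * (L : ℝ) ^ 2 < n := by exact_mod_cast hn
  have hn0 : (0 : ℝ) < n := lt_of_le_of_lt (by positivity) hnR
  have hn1 : (1 : ℝ) ≤ n := by
    have : 1 ≤ n := by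
      have : 0 < n := by exact_mod_cast hn0
      omega
    exact_mod_cast this
  have hkey : (n : ℝ) ≤ 2 * L ^ 2 * k := by
    have ha : 2 * (n : ℝ) ≤ L * #A := by nlinarith
    have hb : (n : ℝ) ≤ L * #(A \ B) := by nlinarith
    have hc : L * (#(A \ B) : ℝ) ≤ L * (L * (k + 1)) := by gcongr
    nlinarith
  refine ⟨B, hBA, ?_, ?_⟩
  · rw [div_mul_eq_mul_div, div_le_iff₀ (by positivity)]
    nlinarith
  · have hA3 : (#A : ℝ) ^ 3 ≤ n ^ 3 := by gcongr
    have h4 : (n : ℝ) ^ 4 ≤ (2 * L ^ 2 * k) ^ 4 := by gcongr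
    have h5 : (n : ℝ) ^ 4 ≤ 16 * L ^ 8 * (((2 * n + 1) * (2 * L)) * indexedEnergy B) := by
      calc (n : ℝ) ^ 4 ≤ 16 * L ^ 8 * k ^ 4 := by rw [show 16 * (L : ℝ) ^ 8 * k ^ 4 = (2 * L ^ 2 * k) ^ 4 by ring]; exact h4
        _ ≤ _ := by gcongr
    have h6 : (n : ℝ) ^ 4 ≤ 16 * L ^ 8 * (((3 * n) * (2 * L)) * indexedEnergy B) := by
      refine h5.trans ?_
      gcongr
      linarith
    have h7 : (n : ℝ) ^ 3 ≤ 96 * L ^ 9 * indexedEnergy B := by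
      have : (n : ℝ) * n ^ 3 ≤ n * (96 * L ^ 9 * indexedEnergy B) := by
        calc (n : ℝ) * n ^ 3 = n ^ 4 := by ring
          _ ≤ _ := h6
          _ = _ := by ring
      exact le_of_mul_le_mul_left this hn0
    rw [div_mul_eq_mul_div, div_le_iff₀ (by positivity)]
    linarith
end
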